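/- Let A_{N,1}, …, A_{N,L} be independent families of N×N random matrices that are uniformly bounded in operator norm, each of which is permutation invariant. Fix n ≥ 2 and ℓ_1, …, ℓ_n ∈ {1,…,L} with ℓ_i ≠ ℓ_{i+1} for 1 ≤ i ≤ n−1. For each N and each i ∈ {1,…,n}, let P_{N,i} = D_{N,0,i} X_{k_{N,i}(1)} D_{N,1,i} ⋯ X_{k_{N,i}(d_{N,i})} D_{N,d_{N,i},i} be a monomial in noncommuting indeterminates (X_k)_{k∈K} whose coefficients D_{N,j,i} are deterministic N×N diagonal matrices, with d_{N,i} ≤ d and ‖D_{N,j,i}‖ ≤ C′ for constants d, C′ independent of N. Set M_{N,i} = P_{N,i}(A_{N,ℓ_i}) and ε_N = Δ[(M_{N,1} − ΔM_{N,1}) ⋯ (M_{N,n} − ΔM_{N,n})]. Then for every integer p ≥ 1 and every δ > 0, P[(1/N) Tr((ε_N ε_N*)^p) > δ] → 0 as N → ∞; that is, the normalized Schatten norms of ε_N converge to zero in probability. -/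

import Mathlib

open MeasureTheory ProbabilityTheory Filter Matrix Asymptotics
open scoped BigOperators ENNReal
open scoped Classical

noncomputable section

/-- The diagonal projection `Δ` on `N × N` complex matrices. -/
def dproj {N : ℕ} (A : Matrix (Fin N) (Fin N) ℂ) : Matrix (Fin N) (Fin N) ℂ :=
  Matrix.of fun i j => if i = j then A i j else 0

/-- The operator norm of a matrix acting on `ℓ²({1,…,N})`. -/
def matOpNorm {N : ℕ} (A : Matrix (Fin N) (Fin N) ℂ) : ℝ :=
  ‖Matrix.toEuclideanCLM (𝕜 := ℂ) A‖

/-! ### Multigraph combinatorics -/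

section Graph

variable {V E : Type} (src tgt : E → V)

/-- Adjacency through an edge avoiding a forbidden set `F` of edges
(direction is ignored). -/
def adjOn (F : Set E) (a b : V) : Prop :=
  ∃ e, e ∉ F ∧ ((src e = a ∧ tgt e = b) ∨ (src e = b ∧ tgt e = a))

/-- Reachability in the graph, using only edges outside `F`. -/
def reachOn (F : Set E) : V → V → Prop :=
  Relation.ReflTransGen (adjOn src tgt F)

lemma adjOn_symm (F : Set E) : Symmetric (adjOn src tgt F) := by
  rintro a b ⟨e, he, h⟩
  exact ⟨e, he, h.symm⟩

/-- The setoid of connectivity using edges outside `F`. -/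
def connSetoid (F : Set E) : Setoid V :=
  ⟨reachOn src tgt F,
    ⟨fun _ => Relation.ReflTransGen.refl,
     fun h => (@Relation.ReflTransGen.stdSymm _ _ ⟨fun _ _ h' => adjOn_symm src tgt F h'⟩).symm _ _ h,
     fun h h' => Relation.ReflTransGen.trans h h'⟩⟩

/-- Number of connected components of the graph with the edges in `F` deleted. -/
def ncompAvoiding (F : Set E) : ℕ :=
  Nat.card (Quotient (connSetoid src tgt F))

/-- Number of connected components. -/
def ncomp : ℕ := ncompAvoiding src tgt ∅

/-- The graph is connected. -/
def IsConnectedGraph : Prop := ∀ a b : V, reachOn src tgt ∅ a b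

/-- A cut edge (bridge): deleting it disconnects its endpoints. -/
def IsCutEdge (e : E) : Prop := ¬ reachOn src tgt {e} (src e) (tgt e)

/-- The set of cut edges. -/
def cutEdges : Set E := {e | IsCutEdge src tgt e}

/-- The setoid whose classes are the two-edge connected components
(connected components after deleting all cut edges). -/
def teccSetoid : Setoid V := connSetoid src tgt (cutEdges src tgt)

/-- Degree, in the forest of two-edge connected components, of a
two-edge connected component: the number of cut edges incident to it. -/
def teccDeg (c : Quotient (teccSetoid src tgt)) : ℕ :=
  Nat.card {e : E // IsCutEdge src tgt e ∧
    (Quotient.mk (teccSetoid src tgt) (src e) = c ∨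
      Quotient.mk (teccSetoid src tgt) (tgt e) = c)}

/-- `𝔣(G)`: the number of leaves of the forest of two-edge connected components,
single-vertex trees of the forest counting twice. -/
def frak : ℕ :=
  Nat.card {c : Quotient (teccSetoid src tgt) // teccDeg src tgt c = 1} +
    2 * Nat.card {c : Quotient (teccSetoid src tgt) // teccDeg src tgt c = 0}

end Graph

/-! ### Graph monomials -/

/-- A graph monomial: a finite directed multigraph with two roots and edges
labelled by a family index in `Fin L` and an index in `K`.  (Connectedness is
required separately via `IsConnectedGraph`.) -/
structure GraphMonomial (L : ℕ) (K : Type) where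
  V : Type
  E : Type
  fintV : Fintype V
  fintE : Fintype E
  src : E → V
  tgt : E → V
  vin : V
  vout : V
  labL : E → Fin L
  labK : E → K

attribute [instance] GraphMonomial.fintV GraphMonomial.fintE

namespace GraphMonomial

variable {L : ℕ} {K : Type} (g : GraphMonomial L K)

/-- Evaluation of a graph monomial in a collection of matrices. -/
def eval {N : ℕ} (A : Fin L → K → Matrix (Fin N) (Fin N) ℂ) :
    Matrix (Fin N) (Fin N) ℂ :=
  Matrix.of fun i j => ∑ φ : g.V → Fin N,
    if φ g.vin = j ∧ φ g.vout = i then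
      ∏ e : g.E, A (g.labL e) (g.labK e) (φ (g.tgt e)) (φ (g.src e))
    else 0

/-- The starting vertex of a step `(e, b)`: `e` traversed forward if `b = true`,
backward otherwise. -/
def stepSrc (s : g.E × Bool) : g.V := if s.2 then g.src s.1 else g.tgt s.1

/-- The ending vertex of a step. -/
def stepTgt (s : g.E × Bool) : g.V := if s.2 then g.tgt s.1 else g.src s.1

/-- A simple cycle of the underlying undirected multigraph: a nonempty cyclic
sequence of steps with pairwise distinct edges and pairwise distinct vertices. -/
def IsSimpleCycle (c : List (g.E × Bool)) : Prop :=
  ∃ h : c ≠ [],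
    (∀ i : Fin c.length,
      g.stepTgt (c.get i) =
        g.stepSrc (c.get ⟨((i : ℕ) + 1) % c.length,
          Nat.mod_lt _ (List.length_pos_iff.mpr h)⟩)) ∧
    (c.map Prod.fst).Nodup ∧ (c.map g.stepSrc).Nodup

/-- A cycle is directed when it traverses all its edges consistently with
their orientations (one way or the other). -/
def IsDirectedCycleList (c : List (g.E × Bool)) : Prop :=
  (∀ s ∈ c, s.2 = true) ∨ (∀ s ∈ c, s.2 = false)

/-- `S` is the edge set of some simple cycle. -/
def IsCycleEdgeSet (S : Finset g.E) : Prop :=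
  ∃ c, g.IsSimpleCycle c ∧ (c.map Prod.fst).toFinset = S

/-- The underlying graph is an oriented cactus: it is connected, every simple
cycle is directed, and every edge belongs to exactly one simple cycle. -/
def IsOrientedCactus : Prop :=
  IsConnectedGraph g.src g.tgt ∧
  (∀ c, g.IsSimpleCycle c → g.IsDirectedCycleList c) ∧
  (∀ e : g.E, ∃! S : Finset g.E, g.IsCycleEdgeSet S ∧ e ∈ S)

/-- A cactus-type monomial: an oriented cactus whose input and output coincide. -/
def IsCactusType : Prop := g.vin = g.vout ∧ g.IsOrientedCactus

/-- A member of `ℱ`: a directed simple path (oriented from the input, at the far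
right, to the output, at the far left) with oriented cacti attached to the
vertices of the path (the root of each cactus being a path vertex). -/
def IsPathCactusType : Prop :=
  IsConnectedGraph g.src g.tgt ∧
  ∃ (d : ℕ) (v : Fin (d + 1) → g.V) (f : Fin d → g.E),
    Function.Injective v ∧ Function.Injective f ∧
    (∀ j : Fin d, g.src (f j) = v j.succ ∧ g.tgt (f j) = v j.castSucc) ∧
    g.vin = v (Fin.last d) ∧ g.vout = v 0 ∧
    (∀ c, g.IsSimpleCycle c → g.IsDirectedCycleList c ∧ ∀ s ∈ c, s.1 ∉ Set.range f) ∧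
    (∀ e : g.E, e ∉ Set.range f →
      ∃! S : Finset g.E, g.IsCycleEdgeSet S ∧ e ∈ S) ∧
    (∀ w : g.V, ∃! j : Fin (d + 1), reachOn g.src g.tgt (Set.range f) w (v j))

end GraphMonomial
/-! ### Random matrices, expectations, test graphs -/

/-- The entries of the random matrix `X` are measurable. -/
def EntriesMeasurable {N : ℕ} {Ω : Type} [MeasurableSpace Ω]
    (X : Ω → Matrix (Fin N) (Fin N) ℂ) : Prop :=
  ∀ i j, Measurable fun ω => X ω i j

/-- The entries of the random matrix `X` are essentially bounded. -/
def EntriesBounded {N : ℕ} {Ω : Type} [MeasurableSpace Ω] (μ : Measure Ω)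
    (X : Ω → Matrix (Fin N) (Fin N) ℂ) : Prop :=
  ∃ C : ℝ, ∀ᵐ ω ∂μ, ∀ i j, ‖X ω i j‖ ≤ C

/-- The σ-algebra generated by the entries of the matrices of a family. -/
def famSigma {N : ℕ} {Ω K : Type} [MeasurableSpace Ω]
    (A : K → Ω → Matrix (Fin N) (Fin N) ℂ) : MeasurableSpace Ω :=
  ⨆ k : K, ⨆ i : Fin N, ⨆ j : Fin N,
    MeasurableSpace.comap (fun ω => A k ω i j) inferInstance

/-- Permutation invariance of a family of `N × N` random matrices. -/
def PermInvariant {N : ℕ} {Ω K : Type} [MeasurableSpace Ω] (μ : Measure Ω)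
    (A : K → Ω → Matrix (Fin N) (Fin N) ℂ) : Prop :=
  ∀ σ : Equiv.Perm (Fin N),
    Measure.map (fun ω => fun (k : K) (i j : Fin N) => A k ω (σ i) (σ j)) μ =
      Measure.map (fun ω => fun (k : K) (i j : Fin N) => A k ω i j) μ

/-- A test graph with matrix-valued edge labels. -/
structure TestGraph (N : ℕ) (Ω : Type) where
  V : Type
  E : Type
  fintV : Fintype V
  fintE : Fintype E
  src : E → V
  tgt : E → V
  lab : E → Ω → Matrix (Fin N) (Fin N) ℂ

attribute [instance] TestGraph.fintV TestGraph.fintE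

namespace TestGraph

variable {N : ℕ} {Ω : Type} [MeasurableSpace Ω]

/-- Number of connected components `c(T)` of a test graph. -/
def ncc (T : TestGraph N Ω) : ℕ := ncomp T.src T.tgt

/-- The (unnormalized) trace observable of a test graph. -/
def tauInner (T : TestGraph N Ω) (ω : Ω) : ℂ :=
  ∑ φ : T.V → Fin N, ∏ e : T.E, T.lab e ω (φ (T.tgt e)) (φ (T.src e))

/-- The (unnormalized) injective trace observable of a test graph. -/
def tau0Inner (T : TestGraph N Ω) (ω : Ω) : ℂ :=
  ∑ φ : T.V → Fin N,
    if Function.Injective φ then ∏ e : T.E, T.lab e ω (φ (T.tgt e)) (φ (T.src e)) else 0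

/-- `τ_N[T]`. -/
def tau (T : TestGraph N Ω) (μ : Measure Ω) : ℂ :=
  ((N : ℂ) ^ T.ncc)⁻¹ * ∫ ω, T.tauInner ω ∂μ

/-- `τ⁰_N[T]`. -/
def tau0 (T : TestGraph N Ω) (μ : Measure Ω) : ℂ :=
  ((N : ℂ) ^ T.ncc)⁻¹ * ∫ ω, T.tau0Inner ω ∂μ

/-- The quotient test graph `T^π` associated with a partition `π` of the
vertices of `T`. -/
def quot (T : TestGraph N Ω) (π : Setoid T.V) : TestGraph N Ω where
  V := Quotient π
  E := T.E
  fintV := @Quotient.fintype _ T.fintV π fun _ _ => Classical.propDecidable _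
  fintE := T.fintE
  src := fun e => Quotient.mk π (T.src e)
  tgt := fun e => Quotient.mk π (T.tgt e)
  lab := T.lab

end TestGraph

/-- Monomial `D₀ X_{k(1)} D₁ ⋯ X_{k(d)} D_d` evaluated in a family of matrices:
the coefficients are given as an arbitrary function `D : ℕ → Matrix`. -/
def monomialEval {K : Type} {N : ℕ} (A : K → Matrix (Fin N) (Fin N) ℂ)
    (dd : ℕ) (kk : ℕ → K) (D : ℕ → Matrix (Fin N) (Fin N) ℂ) :
    Matrix (Fin N) (Fin N) ℂ :=
  D 0 * (List.ofFn fun j : Fin dd => A (kk ((j : ℕ) + 1)) * D ((j : ℕ) + 1)).prod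

/-- The centered product `(M₁ - ΔM₁)(M₂ - ΔM₂)⋯(Mₙ - ΔMₙ)`. -/
def centeredProd {N n : ℕ} (M : Fin n → Matrix (Fin N) (Fin N) ℂ) :
    Matrix (Fin N) (Fin N) ℂ :=
  (List.ofFn fun i : Fin n => M i - dproj (M i)).prod

/-- Mutual independence of the families `A 1, …, A L` of random matrices. -/
def IndepFamilies {Ω K : Type} {L : ℕ} [MeasurableSpace Ω] (μ : Measure Ω)
    (A : (N : ℕ) → Fin L → K → Ω → Matrix (Fin N) (Fin N) ℂ) : Prop :=
  ∀ N : ℕ, ProbabilityTheory.iIndep (fun ℓ : Fin L => famSigma (A N ℓ)) μ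

/-- Uniform boundedness, in operator norm, of families of random matrices. -/
def UnifOpNormBound {Ω K : Type} {L : ℕ} [MeasurableSpace Ω] (μ : Measure Ω)
    (A : (N : ℕ) → Fin L → K → Ω → Matrix (Fin N) (Fin N) ℂ) : Prop :=
  ∃ C : ℝ, ∀ (N : ℕ) (ℓ : Fin L) (k : K), ∀ᵐ ω ∂μ, matOpNorm (A N ℓ k ω) ≤ C

/-- The growth bound (MS) for the family `A · ℓ`:
for all graph monomials `g₁, …, gₘ` labelled in the single family `ℓ` and having
equal input and output, `E[∏ᵢ Tr gᵢ(A_N)] = O(N^{Σᵢ 𝔣(gᵢ)/2})` as `N → ∞`. -/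
def MSBound {Ω K : Type} {L : ℕ} [MeasurableSpace Ω] (μ : Measure Ω)
    (A : (N : ℕ) → Fin L → K → Ω → Matrix (Fin N) (Fin N) ℂ) (ℓ : Fin L) : Prop :=
  ∀ (m : ℕ), 1 ≤ m → ∀ gs : Fin m → GraphMonomial L K,
    (∀ i : Fin m, IsConnectedGraph (gs i).src (gs i).tgt ∧
      (∀ e, (gs i).labL e = ℓ) ∧ (gs i).vin = (gs i).vout) →
    (fun N : ℕ => ∫ ω, ∏ i : Fin m,
        Matrix.trace ((gs i).eval fun ℓ' k => A N ℓ' k ω) ∂μ)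
      =O[atTop] fun N : ℕ => (N : ℝ) ^ ((∑ i : Fin m, (frak (gs i).src (gs i).tgt : ℝ)) / 2)

/-!
Conjugating the families by independent uniform permutations does not change their joint law, so
it suffices to bound, for deterministic bounded families, the average over the permutations of
`∑ x, |F x x|²`, where `F` is the centred product; Markov's inequality and
`Tr ((ε ε*) ^ p) ≤ ‖F‖ ^ (2 (p - 1)) * ∑ x, |F x x|²` then give convergence in probability.
Quantizing the diagonal coefficients, we may assume that they are constant on finitely many blocks
of indices, whose number does not depend on `N`. Composing the permutation of one family with the
transposition of two indices of a common block conjugates the letters of that family by a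
reflection, a perturbation of rank one, and leaves the other letters unchanged. Averaging over the
transpositions inside the blocks amounts to multiplying by a block kernel whose entries have size
`1 / N`, and since the letters have zero diagonal and adjacent letters belong to different
families, an induction on the word length shows that the diagonal of the product is negligible in
quadratic mean.
-/

/-! ### Products of contractions perturbed by a reflection -/

section Reflection

open scoped InnerProductSpace

variable {𝕜 E α : Type*} [RCLike 𝕜] [NormedAddCommGroup E] [InnerProductSpace 𝕜 E]

variable (𝕜) in
/-- The reflection in the hyperplane orthogonal to `w`, as a bounded operator. -/
def hyperplaneReflection (w : E) : E →L[𝕜] E :=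
  ((𝕜 ∙ w)ᗮ.reflection.toContinuousLinearEquiv : E →L[𝕜] E)

variable {w : E}

lemma hyperplaneReflection_apply (hw : ‖w‖ ^ 2 = 2) (y : E) :
    hyperplaneReflection 𝕜 w y = y - ⟪w, y⟫_𝕜 • w := by
  have h : hyperplaneReflection 𝕜 w y = (𝕜 ∙ w)ᗮ.reflection y := rfl
  have hw' : ((‖w‖ : ℝ) : 𝕜) ^ 2 = 2 := by exact_mod_cast hw
  rw [h, Submodule.reflection_orthogonal_apply, Submodule.reflection_singleton_apply, hw',
    neg_sub, two_smul, ← add_smul, add_halves]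

lemma norm_hyperplaneReflection_apply (y : E) : ‖hyperplaneReflection 𝕜 w y‖ = ‖y‖ :=
  (𝕜 ∙ w)ᗮ.reflection.norm_map y

lemma inner_hyperplaneReflection_apply (hw : ‖w‖ ^ 2 = 2) (y : E) :
    ⟪w, hyperplaneReflection 𝕜 w y⟫_𝕜 = -⟪w, y⟫_𝕜 := by
  have hw' : ((‖w‖ : ℝ) : 𝕜) ^ 2 = 2 := by exact_mod_cast hw
  rw [hyperplaneReflection_apply hw, inner_sub_right, inner_smul_right,
    inner_self_eq_norm_sq_to_K, hw']
  ring

/-- The sum of `|⟨w, Vv⟩|` over the suffix products `V` of the word `f a₁ ⋯ f aₙ`; it measures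
how far the suffixes applied to `v` are from being fixed by the reflection along `w`. -/
def suffixSum (f : α → E →L[𝕜] E) (w v : E) (l : List α) : ℝ :=
  ∑ k ∈ Finset.range (l.length + 1), ‖⟪w, ((l.drop k).map f).prod v⟫_𝕜‖

/-- The sum of `|φ(Uw)|` over the prefix products `U` of the word `f a₁ ⋯ f aₙ`. -/
def prefixSum (f : α → E →L[𝕜] E) (φ : E →L[𝕜] 𝕜) (w : E) (l : List α) : ℝ :=
  ∑ k ∈ Finset.range (l.length + 1), ‖φ (((l.take k).map f).prod w)‖

variable {f g : α → E →L[𝕜] E} {v : E} {φ : E →L[𝕜] 𝕜} {a : α} {l : List α}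

lemma suffixSum_nonneg : 0 ≤ suffixSum f w v l :=
  Finset.sum_nonneg fun _ _ => norm_nonneg _

lemma prefixSum_nonneg : 0 ≤ prefixSum f φ w l :=
  Finset.sum_nonneg fun _ _ => norm_nonneg _

lemma suffixSum_cons :
    suffixSum f w v (a :: l) = ‖⟪w, ((a :: l).map f).prod v⟫_𝕜‖ + suffixSum f w v l := by
  rw [suffixSum, List.length_cons, Finset.sum_range_succ', add_comm]
  rfl

lemma prefixSum_cons :
    prefixSum f φ w (a :: l) = ‖φ w‖ + prefixSum f (φ ∘L f a) w l := by
  rw [prefixSum, List.length_cons, Finset.sum_range_succ', add_comm]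
  rfl

lemma norm_inner_prod_le_suffixSum : ‖⟪w, (l.map f).prod v⟫_𝕜‖ ≤ suffixSum f w v l :=
  Finset.single_le_sum (f := fun k => ‖⟪w, ((l.drop k).map f).prod v⟫_𝕜‖)
    (fun _ _ => norm_nonneg _) (Finset.mem_range.2 l.length.succ_pos)

lemma norm_apply_le_prefixSum : ‖φ w‖ ≤ prefixSum f φ w l :=
  Finset.single_le_sum (f := fun k => ‖φ (((l.take k).map f).prod w)‖)
    (fun _ _ => norm_nonneg _) (Finset.mem_range.2 l.length.succ_pos)

/-- `x'` is either `x` or its conjugate by the reflection along `w`. -/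
def EqOrConj (w : E) (x x' : E →L[𝕜] E) : Prop :=
  x' = x ∨ x' = hyperplaneReflection 𝕜 w * x * hyperplaneReflection 𝕜 w

namespace EqOrConj

variable {x x' : E →L[𝕜] E}

lemma norm_apply_le (h : EqOrConj w x x') (hx : ‖x‖ ≤ 1) (y : E) : ‖x' y‖ ≤ ‖y‖ := by
  have hx' : ∀ z, ‖x z‖ ≤ ‖z‖ := fun z => by simpa using x.le_of_opNorm_le hx z
  rcases h with rfl | rfl
  · exact hx' y
  · calc ‖hyperplaneReflection 𝕜 w (x (hyperplaneReflection 𝕜 w y))‖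
        = ‖x (hyperplaneReflection 𝕜 w y)‖ := norm_hyperplaneReflection_apply _
      _ ≤ ‖hyperplaneReflection 𝕜 w y‖ := hx' _
      _ = ‖y‖ := norm_hyperplaneReflection_apply _

lemma norm_apply_sub_apply_le (h : EqOrConj w x x') (hw : ‖w‖ ^ 2 = 2) (hx : ‖x‖ ≤ 1) (y : E) :
    ‖x' y - x y‖ ≤ 2 * ‖⟪w, x y⟫_𝕜‖ + 2 * ‖⟪w, y⟫_𝕜‖ := by
  have hw2 : ‖w‖ ≤ 2 := by nlinarith [norm_nonneg w]
  rcases h with rfl | rfl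
  · rw [sub_self, norm_zero]; positivity
  set T := hyperplaneReflection 𝕜 w
  have hsplit : (T * x * T) y - x y = -(⟪w, x y⟫_𝕜 • w) - ⟪w, y⟫_𝕜 • T (x w) := by
    change T (x (T y)) - x y = _
    rw [hyperplaneReflection_apply hw y, map_sub, map_smul, map_sub, map_smul,
      hyperplaneReflection_apply hw (x y)]
    abel
  have hTxw : ‖T (x w)‖ ≤ 2 := by
    rw [norm_hyperplaneReflection_apply]
    exact (x.le_of_opNorm_le hx w).trans (by simpa using hw2)
  calc ‖(T * x * T) y - x y‖
      ≤ ‖⟪w, x y⟫_𝕜‖ * ‖w‖ + ‖⟪w, y⟫_𝕜‖ * ‖T (x w)‖ := by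
        rw [hsplit, ← norm_smul, ← norm_smul, ← norm_neg (⟪w, x y⟫_𝕜 • w)]
        exact norm_sub_le _ _
    _ ≤ ‖⟪w, x y⟫_𝕜‖ * 2 + ‖⟪w, y⟫_𝕜‖ * 2 := by gcongr
    _ = 2 * ‖⟪w, x y⟫_𝕜‖ + 2 * ‖⟪w, y⟫_𝕜‖ := by ring

lemma norm_functional_apply_sub_le (h : EqOrConj w x x') (hw : ‖w‖ ^ 2 = 2) (φ : E →L[𝕜] 𝕜)
    (y : E) : ‖φ (x' y) - φ (x y)‖ ≤ ‖φ w‖ * ‖⟪w, x' y⟫_𝕜‖ + ‖φ (x w)‖ * ‖⟪w, y⟫_𝕜‖ := by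
  rcases h with rfl | rfl
  · rw [sub_self, norm_zero]; positivity
  set T := hyperplaneReflection 𝕜 w
  have hsplit : φ ((T * x * T) y) - φ (x y) =
      ⟪w, (T * x * T) y⟫_𝕜 * φ w - ⟪w, y⟫_𝕜 * φ (x w) := by
    change φ (T (x (T y))) - φ (x y) = ⟪w, T (x (T y))⟫_𝕜 * φ w - _
    have hTy : φ (x (T y)) = φ (x y) - ⟪w, y⟫_𝕜 * φ (x w) := by
      rw [hyperplaneReflection_apply hw, map_sub, map_smul, map_sub, map_smul, smul_eq_mul]
    rw [inner_hyperplaneReflection_apply hw, hyperplaneReflection_apply hw (x (T y)), map_sub,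
      map_smul, smul_eq_mul, hTy]
    ring
  rw [hsplit, mul_comm ‖φ w‖, mul_comm ‖φ (x w)‖, ← norm_mul, ← norm_mul]
  exact norm_sub_le _ _

end EqOrConj

lemma norm_prod_apply_sub_add_le (hw : ‖w‖ ^ 2 = 2) (hf : ∀ a ∈ l, ‖f a‖ ≤ 1)
    (hg : ∀ a ∈ l, EqOrConj w (f a) (g a)) :
    ‖(l.map g).prod v - (l.map f).prod v‖ + 2 * ‖⟪w, (l.map f).prod v⟫_𝕜‖ ≤
      4 * suffixSum f w v l := by
  induction l with
  | nil =>
    have := norm_inner_prod_le_suffixSum (f := f) (w := w) (v := v) (l := [])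
    simp only [List.map_nil, sub_self, norm_zero] at this ⊢
    linarith [norm_nonneg ⟪w, ([] : List (E →L[𝕜] E)).prod v⟫_𝕜]
  | cons a l ih =>
    simp only [List.forall_mem_cons] at hf hg
    have htail := ih hf.2 hg.2
    rw [suffixSum_cons, List.map_cons, List.map_cons, List.prod_cons, List.prod_cons]
    simp only [mul_apply_eq_comp]
    set y := (l.map f).prod v
    set y' := (l.map g).prod v
    have hsplit : g a y' - f a y = g a (y' - y) + (g a y - f a y) := by rw [map_sub]; abel
    have hcontr := hg.1.norm_apply_le hf.1 (y' - y)
    have hconj := hg.1.norm_apply_sub_apply_le hw hf.1 y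
    have htri := norm_add_le (g a (y' - y)) (g a y - f a y)
    rw [hsplit]
    linarith

lemma norm_prod_apply_sub_le (hw : ‖w‖ ^ 2 = 2) (hf : ∀ a ∈ l, ‖f a‖ ≤ 1)
    (hg : ∀ a ∈ l, EqOrConj w (f a) (g a)) :
    ‖(l.map g).prod v - (l.map f).prod v‖ ≤ 4 * suffixSum f w v l := by
  have := norm_prod_apply_sub_add_le (v := v) hw hf hg
  linarith [norm_nonneg ⟪w, (l.map f).prod v⟫_𝕜]

lemma norm_inner_prod_apply_le (hw : ‖w‖ ^ 2 = 2) (hf : ∀ a ∈ l, ‖f a‖ ≤ 1)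
    (hg : ∀ a ∈ l, EqOrConj w (f a) (g a)) :
    ‖⟪w, (l.map g).prod v⟫_𝕜‖ ≤ 8 * suffixSum f w v l := by
  have hw2 : ‖w‖ ≤ 2 := by nlinarith [norm_nonneg w]
  have hdiff := norm_prod_apply_sub_add_le (v := v) hw hf hg
  set y := (l.map f).prod v
  set y' := (l.map g).prod v
  calc ‖⟪w, y'⟫_𝕜‖ = ‖⟪w, y' - y⟫_𝕜 + ⟪w, y⟫_𝕜‖ := by rw [← inner_add_right, sub_add_cancel]
    _ ≤ ‖w‖ * ‖y' - y‖ + ‖⟪w, y⟫_𝕜‖ :=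
      (norm_add_le _ _).trans (by gcongr; exact norm_inner_le_norm _ _)
    _ ≤ 2 * ‖y' - y‖ + ‖⟪w, y⟫_𝕜‖ := by gcongr
    _ ≤ 8 * suffixSum f w v l := by linarith [norm_nonneg ⟪w, y⟫_𝕜]

lemma norm_functional_prod_apply_sub_le (hw : ‖w‖ ^ 2 = 2) (hf : ∀ a ∈ l, ‖f a‖ ≤ 1)
    (hg : ∀ a ∈ l, EqOrConj w (f a) (g a)) :
    ‖φ ((l.map g).prod v) - φ ((l.map f).prod v)‖ ≤
      8 * suffixSum f w v l * (2 * prefixSum f φ w l - ‖φ w‖) := by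
  induction l generalizing φ with
  | nil =>
    have := norm_apply_le_prefixSum (f := f) (φ := φ) (w := w) (l := [])
    simp only [List.map_nil, sub_self, norm_zero]
    exact mul_nonneg (mul_nonneg (by norm_num) suffixSum_nonneg)
      (by linarith [norm_nonneg (φ w)])
  | cons a l ih =>
    have hword := norm_inner_prod_apply_le (v := v) hw hf hg
    simp only [List.forall_mem_cons] at hf hg
    have htail := ih (φ := φ ∘L f a) hf.2 hg.2
    have htail' := norm_inner_prod_apply_le (v := v) hw hf.2 hg.2
    have hmono : suffixSum f w v l ≤ suffixSum f w v (a :: l) := by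
      rw [suffixSum_cons]; exact le_add_of_nonneg_left (norm_nonneg _)
    have hprefix := norm_apply_le_prefixSum (f := f) (φ := φ ∘L f a) (w := w) (l := l)
    simp only [List.map_cons, List.prod_cons, mul_apply_eq_comp,
      ContinuousLinearMap.comp_apply] at hword htail htail' hprefix ⊢
    rw [prefixSum_cons]
    set y := (l.map f).prod v
    set y' := (l.map g).prod v
    set S := suffixSum f w v l
    set S' := suffixSum f w v (a :: l)
    set P := prefixSum f (φ ∘L f a) w l
    have hhead := hg.1.norm_functional_apply_sub_le hw φ y'
    calc ‖φ (g a y') - φ (f a y)‖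
        ≤ ‖φ (g a y') - φ (f a y')‖ + ‖φ (f a y') - φ (f a y)‖ :=
          norm_sub_le_norm_sub_add_norm_sub ..
      _ ≤ (‖φ w‖ * (8 * S') + ‖φ (f a w)‖ * (8 * S')) + 8 * S' * (2 * P - ‖φ (f a w)‖) := by
        refine add_le_add (hhead.trans ?_) (htail.trans ?_)
        · gcongr
          exact htail'.trans (by gcongr)
        · gcongr
          linarith [norm_nonneg (φ (f a w))]
      _ = 8 * S' * (2 * (‖φ w‖ + P) - ‖φ w‖) := by ring

lemma norm_functional_reflection_prod_sub_le (hw : ‖w‖ ^ 2 = 2) (hf : ∀ a ∈ l, ‖f a‖ ≤ 1)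
    (hg : ∀ a ∈ l, EqOrConj w (f a) (g a)) :
    ‖φ (hyperplaneReflection 𝕜 w ((l.map g).prod v)) - φ ((l.map f).prod v)‖ ≤
      16 * prefixSum f φ w l * suffixSum f w v l := by
  have hword := norm_inner_prod_apply_le (v := v) hw hf hg
  have hdiff := norm_functional_prod_apply_sub_le (v := v) (φ := φ) hw hf hg
  set y := (l.map f).prod v
  set y' := (l.map g).prod v
  set S := suffixSum f w v l
  have hTy : φ (hyperplaneReflection 𝕜 w y') = φ y' - ⟪w, y'⟫_𝕜 * φ w := by
    rw [hyperplaneReflection_apply hw, map_sub, map_smul, smul_eq_mul]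
  calc ‖φ (hyperplaneReflection 𝕜 w y') - φ y‖ = ‖(φ y' - φ y) - ⟪w, y'⟫_𝕜 * φ w‖ := by
        rw [hTy, sub_right_comm]
    _ ≤ ‖φ y' - φ y‖ + ‖⟪w, y'⟫_𝕜‖ * ‖φ w‖ := (norm_sub_le _ _).trans_eq (by rw [norm_mul])
    _ ≤ 8 * S * (2 * prefixSum f φ w l - ‖φ w‖) + 8 * S * ‖φ w‖ := by gcongr
    _ = 16 * prefixSum f φ w l * S := by ring

end Reflection

/-! ### Matrix products in which some factors are conjugated by a transposition -/

section MatrixSwap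

open scoped Matrix.Norms.L2Operator InnerProductSpace

variable {𝕜 I α : Type*} [RCLike 𝕜] [Fintype I] [DecidableEq I]

lemma toEuclideanCLM_single_apply (A : Matrix I I 𝕜) (i j : I) :
    Matrix.toEuclideanCLM (𝕜 := 𝕜) A (EuclideanSpace.single i 1) j = A j i := by
  simp [Matrix.ofLp_toEuclideanCLM]

lemma inner_single_sub_single (j c : I) (y : EuclideanSpace 𝕜 I) :
    ⟪EuclideanSpace.single j (1 : 𝕜) - EuclideanSpace.single c 1, y⟫_𝕜 = y j - y c := by
  simp [inner_sub_left, EuclideanSpace.inner_single_left]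

lemma norm_single_sub_single_sq {j c : I} (hjc : j ≠ c) :
    ‖EuclideanSpace.single j (1 : 𝕜) - EuclideanSpace.single c 1‖ ^ 2 = 2 := by
  have h : ((‖EuclideanSpace.single j (1 : 𝕜) - EuclideanSpace.single c 1‖ : ℝ) : 𝕜) ^ 2 = 2 := by
    rw [← inner_self_eq_norm_sq_to_K, inner_single_sub_single]
    norm_num [hjc, hjc.symm]
  exact_mod_cast h

lemma hyperplaneReflection_single_sub_single_apply {j c : I} (hjc : j ≠ c)
    (y : EuclideanSpace 𝕜 I) (i : I) :
    hyperplaneReflection 𝕜 (EuclideanSpace.single j (1 : 𝕜) - EuclideanSpace.single c 1) y i =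
      y (Equiv.swap j c i) := by
  rw [hyperplaneReflection_apply (norm_single_sub_single_sq hjc), inner_single_sub_single]
  by_cases hj : i = j <;> by_cases hc : i = c <;>
    simp_all [Equiv.swap_apply_of_ne_of_ne]

lemma toEuclideanCLM_submatrix_swap (A : Matrix I I 𝕜) {j c : I} (hjc : j ≠ c) :
    Matrix.toEuclideanCLM (𝕜 := 𝕜) (A.submatrix (Equiv.swap j c) (Equiv.swap j c)) =
      hyperplaneReflection 𝕜 (EuclideanSpace.single j (1 : 𝕜) - EuclideanSpace.single c 1) *
        Matrix.toEuclideanCLM (𝕜 := 𝕜) A *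
        hyperplaneReflection 𝕜 (EuclideanSpace.single j (1 : 𝕜) - EuclideanSpace.single c 1) := by
  ext y i
  rw [mul_apply_eq_comp, mul_apply_eq_comp, hyperplaneReflection_single_sub_single_apply hjc,
    Matrix.ofLp_toEuclideanCLM, Matrix.ofLp_toEuclideanCLM, Matrix.mulVec, Matrix.mulVec,
    dotProduct, dotProduct, ← Equiv.sum_comp (Equiv.swap j c)]
  simp [hyperplaneReflection_single_sub_single_apply hjc]

/-- The sum of `|V j i| + |V c i|` over the suffix products `V` of the word `F a₁ ⋯ F aₙ`. -/
def entrySuffixSum (F : α → Matrix I I 𝕜) (l : List α) (j c i : I) : ℝ :=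
  ∑ k ∈ Finset.range (l.length + 1),
    (‖((l.drop k).map F).prod j i‖ + ‖((l.drop k).map F).prod c i‖)

/-- The sum of `|(M * U) c j| + |(M * U) c c|` over the prefix products `U` of the word
`F a₁ ⋯ F aₙ`. -/
def entryPrefixSum (F : α → Matrix I I 𝕜) (M : Matrix I I 𝕜) (l : List α) (j c : I) : ℝ :=
  ∑ k ∈ Finset.range (l.length + 1),
    (‖(M * ((l.take k).map F).prod) c j‖ + ‖(M * ((l.take k).map F).prod) c c‖)

lemma entrySuffixSum_nonneg {F : α → Matrix I I 𝕜} {l : List α} {j c i : I} :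
    0 ≤ entrySuffixSum F l j c i :=
  Finset.sum_nonneg fun _ _ => by positivity

lemma entryPrefixSum_nonneg {F : α → Matrix I I 𝕜} {M : Matrix I I 𝕜} {l : List α} {j c : I} :
    0 ≤ entryPrefixSum F M l j c :=
  Finset.sum_nonneg fun _ _ => by positivity

variable {F G : α → Matrix I I 𝕜} {l : List α} {j c : I}

lemma toEuclideanCLM_map_prod (F : α → Matrix I I 𝕜) (l : List α) :
    Matrix.toEuclideanCLM (𝕜 := 𝕜) (l.map F).prod =
      (l.map fun a => Matrix.toEuclideanCLM (𝕜 := 𝕜) (F a)).prod := by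
  rw [map_list_prod, List.map_map]
  rfl

lemma suffixSum_toEuclideanCLM_le (i : I) :
    suffixSum (fun a => Matrix.toEuclideanCLM (𝕜 := 𝕜) (F a))
      (EuclideanSpace.single j (1 : 𝕜) - EuclideanSpace.single c 1) (EuclideanSpace.single i 1) l ≤
      entrySuffixSum F l j c i :=
  Finset.sum_le_sum fun k _ => by
    rw [← toEuclideanCLM_map_prod, inner_single_sub_single, toEuclideanCLM_single_apply,
      toEuclideanCLM_single_apply]
    exact norm_sub_le _ _

lemma prefixSum_toEuclideanCLM_le (M : Matrix I I 𝕜) :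
    prefixSum (fun a => Matrix.toEuclideanCLM (𝕜 := 𝕜) (F a))
      (EuclideanSpace.proj c ∘L Matrix.toEuclideanCLM (𝕜 := 𝕜) M)
      (EuclideanSpace.single j (1 : 𝕜) - EuclideanSpace.single c 1) l ≤
      entryPrefixSum F M l j c :=
  Finset.sum_le_sum fun k _ => by
    rw [← toEuclideanCLM_map_prod, ContinuousLinearMap.comp_apply, ← mul_apply_eq_comp, ← map_mul,
      map_sub, map_sub, PiLp.proj_apply, PiLp.proj_apply,
      toEuclideanCLM_single_apply, toEuclideanCLM_single_apply]
    exact norm_sub_le _ _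

lemma eqOrConj_toEuclideanCLM (hjc : j ≠ c)
    (hG : ∀ a ∈ l, G a = F a ∨ G a = (F a).submatrix (Equiv.swap j c) (Equiv.swap j c)) :
    ∀ a ∈ l, EqOrConj (EuclideanSpace.single j (1 : 𝕜) - EuclideanSpace.single c 1)
      (Matrix.toEuclideanCLM (𝕜 := 𝕜) (F a)) (Matrix.toEuclideanCLM (𝕜 := 𝕜) (G a)) :=
  fun a ha => (hG a ha).imp (congrArg _)
    fun h => (congrArg _ h).trans (toEuclideanCLM_submatrix_swap (F a) hjc)

lemma norm_prod_entry_sub_le (hjc : j ≠ c) (hF : ∀ a ∈ l, ‖F a‖ ≤ 1)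
    (hG : ∀ a ∈ l, G a = F a ∨ G a = (F a).submatrix (Equiv.swap j c) (Equiv.swap j c))
    (r i : I) :
    ‖(l.map G).prod r i - (l.map F).prod r i‖ ≤ 4 * entrySuffixSum F l j c i := by
  rw [← toEuclideanCLM_single_apply (l.map G).prod, ← toEuclideanCLM_single_apply (l.map F).prod,
    ← PiLp.sub_apply, toEuclideanCLM_map_prod, toEuclideanCLM_map_prod]
  exact (PiLp.norm_apply_le _ r).trans <|
    (norm_prod_apply_sub_le (norm_single_sub_single_sq hjc) hF
      (eqOrConj_toEuclideanCLM hjc hG)).trans (by gcongr; exact suffixSum_toEuclideanCLM_le i)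

lemma norm_submatrix_swap_mul_prod_entry_sub_le (hjc : j ≠ c) (hF : ∀ a ∈ l, ‖F a‖ ≤ 1)
    (hG : ∀ a ∈ l, G a = F a ∨ G a = (F a).submatrix (Equiv.swap j c) (Equiv.swap j c))
    (M : Matrix I I 𝕜) (i : I) :
    ‖(M.submatrix (Equiv.swap j c) (Equiv.swap j c) * (l.map G).prod) j i -
        (M * (l.map F).prod) c i‖ ≤
      16 * entryPrefixSum F M l j c * entrySuffixSum F l j c i := by
  have hoperator := norm_functional_reflection_prod_sub_le (v := EuclideanSpace.single i (1 : 𝕜))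
    (φ := EuclideanSpace.proj c ∘L Matrix.toEuclideanCLM (𝕜 := 𝕜) M)
    (norm_single_sub_single_sq (𝕜 := 𝕜) hjc) hF (eqOrConj_toEuclideanCLM hjc hG)
  have hleft : (M.submatrix (Equiv.swap j c) (Equiv.swap j c) * (l.map G).prod) j i =
      (EuclideanSpace.proj c ∘L Matrix.toEuclideanCLM (𝕜 := 𝕜) M)
        (hyperplaneReflection 𝕜 (EuclideanSpace.single j (1 : 𝕜) - EuclideanSpace.single c 1)
          (Matrix.toEuclideanCLM (𝕜 := 𝕜) (l.map G).prod (EuclideanSpace.single i 1))) := by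
    rw [← toEuclideanCLM_single_apply (M.submatrix _ _ * _), map_mul,
      toEuclideanCLM_submatrix_swap M hjc, mul_apply_eq_comp, mul_apply_eq_comp, mul_apply_eq_comp,
      hyperplaneReflection_single_sub_single_apply hjc, Equiv.swap_apply_left]
    rfl
  have hright : (M * (l.map F).prod) c i =
      (EuclideanSpace.proj c ∘L Matrix.toEuclideanCLM (𝕜 := 𝕜) M)
        (Matrix.toEuclideanCLM (𝕜 := 𝕜) (l.map F).prod (EuclideanSpace.single i 1)) := by
    rw [← toEuclideanCLM_single_apply (M * _), map_mul]
    rfl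
  rw [hleft, hright, toEuclideanCLM_map_prod, toEuclideanCLM_map_prod]
  refine hoperator.trans ?_
  gcongr
  · exact suffixSum_nonneg
  · exact mul_nonneg (by norm_num) entryPrefixSum_nonneg
  · exact prefixSum_toEuclideanCLM_le M
  · exact suffixSum_toEuclideanCLM_le i

end MatrixSwap

/-! ### Entrywise estimates for contractions -/

section Estimates

open scoped Matrix.Norms.L2Operator

variable {𝕜 I : Type*} [RCLike 𝕜] [Fintype I]

lemma sum_mul_le_of_sum_sq_le {a b : I → ℝ} {A B : ℝ} (hA : 0 ≤ A) (hB : 0 ≤ B)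
    (ha : ∑ i, a i ^ 2 ≤ A ^ 2) (hb : ∑ i, b i ^ 2 ≤ B ^ 2) : ∑ i, a i * b i ≤ A * B :=
  (Real.sum_mul_le_sqrt_mul_sqrt _ _ _).trans
    (mul_le_mul (Real.sqrt_le_iff.2 ⟨hA, ha⟩) (Real.sqrt_le_iff.2 ⟨hB, hb⟩)
      (Real.sqrt_nonneg _) hA)

lemma sum_le_of_sum_sq_le {a : I → ℝ} {A : ℝ} (hA : 0 ≤ A) (ha : ∑ i, a i ^ 2 ≤ A ^ 2) :
    ∑ i, a i ≤ A * √(Fintype.card I) := by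
  simpa using sum_mul_le_of_sum_sq_le (b := fun _ => 1) hA (Real.sqrt_nonneg (Fintype.card I)) ha
    (by simp)

lemma sum_norm_diag_le (X : Matrix I I 𝕜) :
    ∑ i, ‖X i i‖ ≤ √(∑ i, ∑ j, ‖X i j‖ ^ 2) * √(Fintype.card I) := by
  refine sum_le_of_sum_sq_le (Real.sqrt_nonneg _) ?_
  rw [Real.sq_sqrt (by positivity)]
  exact Finset.sum_le_sum fun i _ => Finset.single_le_sum (f := fun j => ‖X i j‖ ^ 2)
    (fun j _ => by positivity) (Finset.mem_univ i)

lemma sum_sum_mul_mul_add_le {a h y : I → ℝ} (hh0 : ∀ j, 0 ≤ h j) (hy0 : ∀ j, 0 ≤ y j)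
    (ha : ∑ j, a j ^ 2 ≤ 1) (hh : ∑ j, h j ^ 2 ≤ 1) (hy : ∑ j, y j ^ 2 ≤ 1) :
    ∑ j, ∑ c, a j * h c * (y j + y c) ≤ 2 * √(Fintype.card I) := by
  rw [← one_pow 2] at ha hh hy
  have hsplit : ∑ j, ∑ c, a j * h c * (y j + y c) =
      (∑ j, a j * y j) * (∑ c, h c) + (∑ j, a j) * ∑ c, h c * y c := by
    simp only [Finset.sum_mul_sum, ← Finset.sum_add_distrib]
    exact Finset.sum_congr rfl fun j _ => Finset.sum_congr rfl fun c _ => by ring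
  have hh1 : 0 ≤ ∑ c, h c := Finset.sum_nonneg fun c _ => hh0 c
  have hhy1 : 0 ≤ ∑ c, h c * y c := Finset.sum_nonneg fun c _ => mul_nonneg (hh0 c) (hy0 c)
  calc ∑ j, ∑ c, a j * h c * (y j + y c)
      ≤ (1 * 1) * (1 * √(Fintype.card I)) + (1 * √(Fintype.card I)) * (1 * 1) := by
        rw [hsplit]
        gcongr
        · exact sum_mul_le_of_sum_sq_le zero_le_one zero_le_one ha hy
        · exact sum_le_of_sum_sq_le zero_le_one hh
        · exact sum_le_of_sum_sq_le zero_le_one ha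
        · exact sum_mul_le_of_sum_sq_le zero_le_one zero_le_one hh hy
    _ = 2 * √(Fintype.card I) := by ring

lemma sum_sum_mul_add_mul_add_le {a r : I → ℝ} {X : I → I → ℝ}
    (ha0 : ∀ j, 0 ≤ a j) (hr0 : ∀ j, 0 ≤ r j) (hX0 : ∀ c j, 0 ≤ X c j)
    (ha : ∑ j, a j ^ 2 ≤ 1) (hr : ∑ j, r j ^ 2 ≤ 1) (hX : ∀ j, ∑ c, X c j ^ 2 ≤ 1) :
    ∑ j, ∑ c, a j * (X c j + X c c) * (r j + r c) ≤
      2 * √(Fintype.card I) * (1 + √(∑ c, X c c ^ 2)) := by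
  rw [← one_pow 2] at ha hr
  replace hX : ∀ j, ∑ c, X c j ^ 2 ≤ 1 ^ 2 := by simpa only [one_pow] using hX
  set D := √(∑ c, X c c ^ 2)
  have hdiag : ∑ c, X c c ^ 2 ≤ D ^ 2 := (Real.sq_sqrt (by positivity)).ge
  have hD : 0 ≤ D := Real.sqrt_nonneg _
  have hsplit : ∑ j, ∑ c, a j * (X c j + X c c) * (r j + r c) =
      (∑ j, a j * r j * ∑ c, X c j) + (∑ j, a j * ∑ c, X c j * r c) +
        (∑ j, a j * r j) * (∑ c, X c c) + (∑ j, a j) * ∑ c, X c c * r c := by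
    rw [Finset.sum_mul_sum, Finset.sum_mul_sum]
    simp only [Finset.mul_sum, ← Finset.sum_add_distrib]
    exact Finset.sum_congr rfl fun j _ => Finset.sum_congr rfl fun c _ => by ring
  have hXcol : ∑ j, a j * r j * ∑ c, X c j ≤ (∑ j, a j * r j) * (1 * √(Fintype.card I)) := by
    rw [Finset.sum_mul]
    exact Finset.sum_le_sum fun j _ => mul_le_mul_of_nonneg_left
      (sum_le_of_sum_sq_le zero_le_one (hX j)) (mul_nonneg (ha0 j) (hr0 j))
  have hXr : ∑ j, a j * ∑ c, X c j * r c ≤ (∑ j, a j) * (1 * 1) := by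
    rw [Finset.sum_mul]
    exact Finset.sum_le_sum fun j _ => mul_le_mul_of_nonneg_left
      (sum_mul_le_of_sum_sq_le zero_le_one zero_le_one (hX j) hr) (ha0 j)
  calc ∑ j, ∑ c, a j * (X c j + X c c) * (r j + r c)
      ≤ (∑ j, a j * r j) * (1 * √(Fintype.card I)) + (∑ j, a j) * (1 * 1) +
          (∑ j, a j * r j) * (∑ c, X c c) + (∑ j, a j) * ∑ c, X c c * r c := by
        rw [hsplit]
        linarith
    _ ≤ (1 * 1) * (1 * √(Fintype.card I)) + (1 * √(Fintype.card I)) * (1 * 1) +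
          (1 * 1) * (D * √(Fintype.card I)) + (1 * √(Fintype.card I)) * (D * 1) := by
        have har := sum_mul_le_of_sum_sq_le zero_le_one zero_le_one ha hr
        have ha1 := sum_le_of_sum_sq_le zero_le_one ha
        gcongr
        · exact Finset.sum_nonneg fun c _ => hX0 c c
        · exact sum_le_of_sum_sq_le hD hdiag
        · exact Finset.sum_nonneg fun c _ => mul_nonneg (hX0 c c) (hr0 c)
        · exact sum_mul_le_of_sum_sq_le hD zero_le_one hdiag hr
    _ = 2 * √(Fintype.card I) * (1 + D) := by ring

variable [DecidableEq I]

lemma l2_opNorm_one_le : ‖(1 : Matrix I I 𝕜)‖ ≤ 1 := by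
  rw [Matrix.cstar_norm_def, map_one]
  exact ContinuousLinearMap.norm_id_le

lemma sum_norm_sq_col_le (A : Matrix I I 𝕜) (j : I) : ∑ i, ‖A i j‖ ^ 2 ≤ ‖A‖ ^ 2 := by
  have h := Matrix.l2_opNorm_mulVec A (EuclideanSpace.single j (1 : 𝕜))
  rw [PiLp.norm_single, norm_one, mul_one, EuclideanSpace.norm_eq,
    Real.sqrt_le_left (norm_nonneg _)] at h
  simpa using h

lemma sum_norm_sq_row_le (A : Matrix I I 𝕜) (i : I) : ∑ j, ‖A i j‖ ^ 2 ≤ ‖A‖ ^ 2 := by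
  simpa [Matrix.l2_opNorm_conjTranspose] using sum_norm_sq_col_le Aᴴ i

lemma sum_norm_sq_col_le_one {A : Matrix I I 𝕜} (hA : ‖A‖ ≤ 1) (j : I) :
    ∑ i, ‖A i j‖ ^ 2 ≤ 1 :=
  (sum_norm_sq_col_le A j).trans (pow_le_one₀ (norm_nonneg _) hA)

lemma sum_norm_sq_row_le_one {A : Matrix I I 𝕜} (hA : ‖A‖ ≤ 1) (i : I) :
    ∑ j, ‖A i j‖ ^ 2 ≤ 1 :=
  (sum_norm_sq_row_le A i).trans (pow_le_one₀ (norm_nonneg _) hA)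

lemma norm_entry_le_l2_opNorm (A : Matrix I I 𝕜) (i j : I) : ‖A i j‖ ≤ ‖A‖ :=
  le_of_sq_le_sq ((Finset.single_le_sum (f := fun i => ‖A i j‖ ^ 2) (fun _ _ => by positivity)
    (Finset.mem_univ i)).trans (sum_norm_sq_col_le A j)) (norm_nonneg _)

lemma sum_norm_sq_mul_le_left (A X : Matrix I I 𝕜) :
    ∑ i, ∑ j, ‖(A * X) i j‖ ^ 2 ≤ ‖A‖ ^ 2 * ∑ i, ∑ j, ‖X i j‖ ^ 2 := by
  rw [Finset.sum_comm, Finset.sum_comm (f := fun i j => ‖X i j‖ ^ 2), Finset.mul_sum]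
  refine Finset.sum_le_sum fun j _ => ?_
  have h := pow_le_pow_left₀ (norm_nonneg _)
    (Matrix.l2_opNorm_mulVec A (WithLp.toLp 2 (fun i => X i j))) 2
  rw [mul_pow, EuclideanSpace.norm_sq_eq, EuclideanSpace.norm_sq_eq] at h
  simpa [Matrix.mulVec, dotProduct, Matrix.mul_apply] using h

lemma sum_norm_sq_mul_le_right (X A : Matrix I I 𝕜) :
    ∑ i, ∑ j, ‖(X * A) i j‖ ^ 2 ≤ (∑ i, ∑ j, ‖X i j‖ ^ 2) * ‖A‖ ^ 2 := by
  have h := sum_norm_sq_mul_le_left Aᴴ Xᴴ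
  rw [← Matrix.conjTranspose_mul, Matrix.l2_opNorm_conjTranspose] at h
  simp only [Matrix.conjTranspose_apply, norm_star] at h
  rwa [Finset.sum_comm, Finset.sum_comm (f := fun i j => ‖X i j‖ ^ 2), mul_comm]

lemma sum_norm_diag_mul_mul_le {A B : Matrix I I 𝕜} (X : Matrix I I 𝕜) (hA : ‖A‖ ≤ 1)
    (hB : ‖B‖ ≤ 1) :
    ∑ i, ‖(A * X * B) i i‖ ≤ √(∑ i, ∑ j, ‖X i j‖ ^ 2) * √(Fintype.card I) := by
  refine (sum_norm_diag_le _).trans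
    (mul_le_mul_of_nonneg_right (Real.sqrt_le_sqrt ?_) (Real.sqrt_nonneg _))
  calc ∑ i, ∑ j, ‖(A * X * B) i j‖ ^ 2
      ≤ (‖A‖ ^ 2 * ∑ i, ∑ j, ‖X i j‖ ^ 2) * ‖B‖ ^ 2 :=
        (sum_norm_sq_mul_le_right _ _).trans (by gcongr; exact sum_norm_sq_mul_le_left _ _)
    _ ≤ (1 ^ 2 * ∑ i, ∑ j, ‖X i j‖ ^ 2) * 1 ^ 2 := by gcongr
    _ = ∑ i, ∑ j, ‖X i j‖ ^ 2 := by ring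

end Estimates

/-! ### Kernels averaging over the blocks of a partition -/

section BlockKernel

variable {I Q : Type*} [Fintype I]

/-- A stochastic kernel `W` that only moves points within the fibres of `β`, with off-diagonal
entries at most `κ / |I|` and with `∑ j, ∑ c, W j c ^ 2 ≤ ρ * |I|`: replacing `j` by a `W j`-random
point costs little, and `W` has a small Hilbert–Schmidt norm. -/
structure IsBlockKernel (β : I → Q) (κ ρ : ℝ) (W : I → I → ℝ) : Prop where
  nonneg : ∀ j c, 0 ≤ W j c
  sum_eq_one : ∀ j, ∑ c, W j c = 1
  eq_of_ne_zero : ∀ j c, W j c ≠ 0 → β j = β c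
  le_of_ne : ∀ j c, j ≠ c → W j c ≤ κ / Fintype.card I
  sum_sq_le : ∑ j, ∑ c, W j c ^ 2 ≤ ρ * Fintype.card I

variable (β : I → Q) (η : ℝ)

/-- The number of elements of the fibre of `β` over `r`. -/
def fibreCard (r : Q) : ℕ := (Finset.univ.filter fun c => β c = r).card

/-- The kernel choosing a uniformly random point of the fibre of `β` through `j`, except that it
does not move `j` when that fibre has less than `η * |I|` elements. -/
def blockKernel (j c : I) : ℝ :=
  if η * Fintype.card I ≤ fibreCard β (β j) then
    if β c = β j then (fibreCard β (β j) : ℝ)⁻¹ else 0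
  else if c = j then 1 else 0

variable {η}

lemma blockKernel_nonneg (j c : I) : 0 ≤ blockKernel β η j c := by
  unfold blockKernel
  split_ifs <;> positivity

lemma sum_blockKernel (j : I) : ∑ c, blockKernel β η j c = 1 := by
  unfold blockKernel
  split_ifs
  · have hcard : fibreCard β (β j) ≠ 0 := (Finset.card_pos.2 ⟨j, by simp⟩).ne'
    rw [← Finset.sum_filter, Finset.sum_const, nsmul_eq_mul]
    exact mul_inv_cancel₀ (Nat.cast_ne_zero.2 hcard)
  · simp

lemma blockKernel_le_of_ne (hη : 0 < η) {j c : I} (hjc : j ≠ c) :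
    blockKernel β η j c ≤ η⁻¹ / Fintype.card I := by
  have hI : 0 < Fintype.card I := Fintype.card_pos_iff.2 ⟨j⟩
  rw [blockKernel, if_neg hjc.symm, div_eq_mul_inv, ← mul_inv]
  split_ifs with hlarge
  · exact inv_anti₀ (by positivity) hlarge
  all_goals positivity

lemma sum_blockKernel_sq_le (j : I) :
    ∑ c, blockKernel β η j c ^ 2 ≤
      if η * Fintype.card I ≤ fibreCard β (β j) then (fibreCard β (β j) : ℝ)⁻¹ else 1 := by
  set b : ℝ := if η * Fintype.card I ≤ fibreCard β (β j) then (fibreCard β (β j) : ℝ)⁻¹ else 1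
    with hb
  have hle (c) : blockKernel β η j c ≤ b := by
    rw [hb, blockKernel]
    split_ifs <;> first | positivity | norm_num
  calc ∑ c, blockKernel β η j c ^ 2 ≤ ∑ c, b * blockKernel β η j c :=
        Finset.sum_le_sum fun c _ => by
          rw [sq]
          exact mul_le_mul_of_nonneg_right (hle c) (blockKernel_nonneg β j c)
    _ = b := by rw [← Finset.mul_sum, sum_blockKernel, mul_one]

lemma sum_sum_blockKernel_sq_le [Fintype Q] (hη : 0 ≤ η) :
    ∑ j, ∑ c, blockKernel β η j c ^ 2 ≤ Fintype.card Q * (1 + η * Fintype.card I) := by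
  have hηI : 0 ≤ η * Fintype.card I := by positivity
  set b : Q → ℝ := fun r =>
    if η * Fintype.card I ≤ fibreCard β r then (fibreCard β r : ℝ)⁻¹ else 1 with hb
  have hfibre (r) : fibreCard β r * b r ≤ 1 + η * Fintype.card I := by
    simp only [hb]
    split_ifs with h
    · exact mul_inv_le_one.trans (by linarith)
    · linarith
  calc ∑ j, ∑ c, blockKernel β η j c ^ 2 ≤ ∑ j, b (β j) :=
        Finset.sum_le_sum fun j _ => sum_blockKernel_sq_le β j
    _ = ∑ r, fibreCard β r * b r := by
        rw [← Finset.sum_fiberwise' Finset.univ β b]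
        simp only [Finset.sum_const, nsmul_eq_mul, fibreCard]
    _ ≤ ∑ _r : Q, (1 + η * Fintype.card I) := Finset.sum_le_sum fun r _ => hfibre r
    _ = Fintype.card Q * (1 + η * Fintype.card I) := by
        rw [Finset.sum_const, nsmul_eq_mul, Finset.card_univ]

lemma isBlockKernel_blockKernel [Nonempty I] [Fintype Q] (hη : 0 < η) :
    IsBlockKernel β η⁻¹ (Fintype.card Q / Fintype.card I + Fintype.card Q * η)
      (blockKernel β η) where
  nonneg := blockKernel_nonneg β
  sum_eq_one := sum_blockKernel β
  eq_of_ne_zero j c h := by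
    by_contra hne
    have hcj : c ≠ j := fun hcj => hne (by rw [hcj])
    simp [blockKernel, Ne.symm hne, hcj] at h
  le_of_ne _ _ := blockKernel_le_of_ne β hη
  sum_sq_le := (sum_sum_blockKernel_sq_le β hη.le).trans_eq (by field_simp)

end BlockKernel

/-! ### Words in centred letters -/

section Words

open scoped Matrix.Norms.L2Operator

variable {𝕜 I ι S Q : Type*}

/-- A matrix depending on a state in `S`, carrying a colour in `ι`. -/
structure Letter (𝕜 I ι S : Type*) where
  color : ι
  val : S → Matrix I I 𝕜

variable [RCLike 𝕜] [Fintype I] [DecidableEq I]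

/-- The product of the matrices of the letters of a word, all in the same state. -/
def wordProd (u : List (Letter 𝕜 I ι S)) (s : S) : Matrix I I 𝕜 :=
  (u.map fun x => x.val s).prod

/-- The squared Frobenius norm of the diagonal of the product of a word, summed over all states. -/
def diagSq [Fintype S] (u : List (Letter 𝕜 I ι S)) : ℝ :=
  ∑ s, ∑ i, ‖wordProd u s i i‖ ^ 2

/-- A letter with values in the contractions with zero diagonal, on which the permutation `θ ℓ j c`
of the states acts as conjugation by the transposition of `j` and `c` if its colour is `ℓ`, and
trivially otherwise, whenever `j` and `c` are in the same fibre of `β`. -/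
structure IsSwapLetter (β : I → Q) (θ : ι → I → I → Equiv.Perm S) (x : Letter 𝕜 I ι S) :
    Prop where
  norm_le_one : ∀ s, ‖x.val s‖ ≤ 1
  diag_eq_zero : ∀ s i, x.val s i i = 0
  val_of_eq : ∀ ℓ j c s, β j = β c → x.color = ℓ →
    x.val (θ ℓ j c s) = (x.val s).submatrix (Equiv.swap j c) (Equiv.swap j c)
  val_of_ne : ∀ ℓ j c s, β j = β c → x.color ≠ ℓ → x.val (θ ℓ j c s) = x.val s

variable {β : I → Q} {θ : ι → I → I → Equiv.Perm S} {u : List (Letter 𝕜 I ι S)}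

lemma wordProd_cons (x : Letter 𝕜 I ι S) (u : List (Letter 𝕜 I ι S)) (s : S) :
    wordProd (x :: u) s = x.val s * wordProd u s :=
  List.prod_cons

lemma norm_wordProd_le_one (hu : ∀ x ∈ u, IsSwapLetter β θ x) (s : S) : ‖wordProd u s‖ ≤ 1 := by
  induction u with
  | nil => exact l2_opNorm_one_le
  | cons x u ih =>
    rw [List.forall_mem_cons] at hu
    rw [wordProd_cons]
    exact (norm_mul_le _ _).trans
      (mul_le_one₀ (hu.1.norm_le_one s) (norm_nonneg _) (ih hu.2))

lemma IsSwapLetter.val_eq_or_eq_submatrix {x : Letter 𝕜 I ι S} (hx : IsSwapLetter β θ x) (ℓ : ι)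
    {j c : I} (hjc : β j = β c) (s : S) :
    x.val (θ ℓ j c s) = x.val s ∨
      x.val (θ ℓ j c s) = (x.val s).submatrix (Equiv.swap j c) (Equiv.swap j c) :=
  (eq_or_ne x.color ℓ).symm.imp (hx.val_of_ne ℓ j c s hjc) (hx.val_of_eq ℓ j c s hjc)

lemma wordProd_swap_self (hu : ∀ x ∈ u, IsSwapLetter β θ x) (ℓ : ι) (j : I) (s : S) :
    wordProd u (θ ℓ j j s) = wordProd u s := by
  refine congrArg List.prod (List.map_congr_left fun x hx => ?_)
  simpa using (hu x hx).val_eq_or_eq_submatrix ℓ (rfl : β j = β j) s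

end Words

/-! ### Averaging a word over transpositions of its second letter -/

section Step

open scoped Matrix.Norms.L2Operator ComplexConjugate

variable {𝕜 I ι S Q : Type*} [RCLike 𝕜] [Fintype I]

lemma sum_sum_eq_sum_kernel_mul_perm [Fintype S] {W : I → I → ℝ} (hW : ∀ j, ∑ c, W j c = 1)
    (σ : I → I → Equiv.Perm S) (g : I → S → 𝕜) :
    ∑ s, ∑ j, g j s = ∑ s, ∑ j, ∑ c, (W j c : 𝕜) * g j (σ j c s) := by
  rw [Finset.sum_comm, Finset.sum_comm (f := fun s j => ∑ c, (W j c : 𝕜) * g j (σ j c s))]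
  refine Finset.sum_congr rfl fun j _ => ?_
  have haverage : ∑ c, (W j c : 𝕜) = 1 := by rw [← RCLike.ofReal_sum, hW, RCLike.ofReal_one]
  calc ∑ s, g j s = ∑ c, (W j c : 𝕜) * ∑ s, g j (σ j c s) := by
        simp only [Equiv.sum_comp (σ j _) (g j), ← Finset.sum_mul, haverage, one_mul]
    _ = ∑ s, ∑ c, (W j c : 𝕜) * g j (σ j c s) := by
        simp only [Finset.mul_sum]
        exact Finset.sum_comm

variable [DecidableEq I]

/-- The `(j, c)`-term of the expansion of `conj (wordProd (x :: v) i i) * (x * W * wordProd v) i i`,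
where `W` is any matrix with entries `W j c`. -/
def swapTerm (x : Letter 𝕜 I ι S) (v : List (Letter 𝕜 I ι S)) (s : S) (i j c : I) : 𝕜 :=
  conj (wordProd (x :: v) s i i) * (x.val s i j * wordProd v s c i)

/-- The bound for the difference between `swapTerm x (y :: u) s i j c` and
`swapTerm x (y :: u) s' i j j`, where in the state `s'` the letters of the colour of `y`, but not
`x`, are conjugated by the transposition of `j` and `c`. -/
def swapError (x y : Letter 𝕜 I ι S) (u : List (Letter 𝕜 I ι S)) (s : S) (i j c : I) : ℝ :=
  4 * (‖x.val s i j‖ * ‖wordProd (y :: u) s c i‖ *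
      entrySuffixSum (fun z => z.val s) (x :: y :: u) j c i) +
    16 * (‖x.val s i j‖ * entryPrefixSum (fun z => z.val s) (y.val s) u j c *
      entrySuffixSum (fun z => z.val s) u j c i)

variable {β : I → Q} {θ : ι → I → I → Equiv.Perm S} {x y : Letter 𝕜 I ι S}
  {u : List (Letter 𝕜 I ι S)}

lemma swapError_nonneg (s : S) (i j c : I) : 0 ≤ swapError x y u s i j c := by
  have := entrySuffixSum_nonneg (F := fun z : Letter 𝕜 I ι S => z.val s) (l := x :: y :: u)
    (j := j) (c := c) (i := i)
  have := entrySuffixSum_nonneg (F := fun z : Letter 𝕜 I ι S => z.val s) (l := u)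
    (j := j) (c := c) (i := i)
  have := entryPrefixSum_nonneg (F := fun z : Letter 𝕜 I ι S => z.val s) (M := y.val s) (l := u)
    (j := j) (c := c)
  unfold swapError
  positivity

lemma norm_swapTerm_swap_sub_le (hx : IsSwapLetter β θ x) (hy : IsSwapLetter β θ y)
    (hu : ∀ z ∈ u, IsSwapLetter β θ z) (hxy : x.color ≠ y.color) {j c : I} (hjc : j ≠ c)
    (hβ : β j = β c) (s : S) (i : I) :
    ‖swapTerm x (y :: u) (θ y.color j c s) i j j - swapTerm x (y :: u) s i j c‖ ≤
      swapError x y u s i j c := by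
  have hyu : ∀ z ∈ y :: u, IsSwapLetter β θ z := List.forall_mem_cons.2 ⟨hy, hu⟩
  have hxyu : ∀ z ∈ x :: y :: u, IsSwapLetter β θ z := List.forall_mem_cons.2 ⟨hx, hyu⟩
  have hword : ‖wordProd (x :: y :: u) (θ y.color j c s) i i - wordProd (x :: y :: u) s i i‖ ≤
      4 * entrySuffixSum (fun z => z.val s) (x :: y :: u) j c i :=
    norm_prod_entry_sub_le hjc (fun z hz => (hxyu z hz).norm_le_one s)
      (fun z hz => (hxyu z hz).val_eq_or_eq_submatrix y.color hβ s) i i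
  have htail : ‖wordProd (y :: u) (θ y.color j c s) j i - wordProd (y :: u) s c i‖ ≤
      16 * entryPrefixSum (fun z => z.val s) (y.val s) u j c *
        entrySuffixSum (fun z => z.val s) u j c i := by
    rw [wordProd_cons, wordProd_cons, hy.val_of_eq y.color j c s hβ rfl]
    exact norm_submatrix_swap_mul_prod_entry_sub_le hjc (fun z hz => (hu z hz).norm_le_one s)
      (fun z hz => (hu z hz).val_eq_or_eq_submatrix y.color hβ s) (y.val s) i
  have hone : ‖wordProd (x :: y :: u) (θ y.color j c s) i i‖ ≤ 1 :=
    (norm_entry_le_l2_opNorm _ _ _).trans (norm_wordProd_le_one hxyu _)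
  rw [swapTerm, swapTerm, hx.val_of_ne y.color j c s hβ hxy, swapError]
  set F' := wordProd (x :: y :: u) (θ y.color j c s) i i
  set F := wordProd (x :: y :: u) s i i
  set H' := wordProd (y :: u) (θ y.color j c s) j i
  set H := wordProd (y :: u) s c i
  calc ‖conj F' * (x.val s i j * H') - conj F * (x.val s i j * H)‖
      = ‖x.val s i j * (conj (F' - F) * H + conj F' * (H' - H))‖ := by
        rw [map_sub]; congr 1; ring
    _ ≤ ‖x.val s i j‖ * (‖F' - F‖ * ‖H‖ + ‖F'‖ * ‖H' - H‖) := by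
        rw [norm_mul]
        gcongr
        refine (norm_add_le _ _).trans_eq ?_
        rw [norm_mul, norm_mul, RCLike.norm_conj, RCLike.norm_conj]
    _ ≤ ‖x.val s i j‖ * (4 * entrySuffixSum (fun z => z.val s) (x :: y :: u) j c i * ‖H‖ +
          1 * (16 * entryPrefixSum (fun z => z.val s) (y.val s) u j c *
            entrySuffixSum (fun z => z.val s) u j c i)) := by gcongr
    _ = _ := by ring

/-- The Frobenius norm of the diagonal of the product of a word. -/
def diagNorm (u : List (Letter 𝕜 I ι S)) (s : S) : ℝ :=
  √(∑ c, ‖wordProd u s c c‖ ^ 2)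

/-- The sum of the diagonal Frobenius norms of `y :: v` over the prefixes `v` of `u`. -/
def prefixDiagSum (y : Letter 𝕜 I ι S) (u : List (Letter 𝕜 I ι S)) (s : S) : ℝ :=
  ∑ k ∈ Finset.range (u.length + 1), diagNorm (y :: u.take k) s

lemma sum_sum_mul_entrySuffixSum_le (hu : ∀ z ∈ u, IsSwapLetter β θ z) {A B : Matrix I I 𝕜}
    (hA : ‖A‖ ≤ 1) (hB : ‖B‖ ≤ 1) (s : S) (i : I) :
    ∑ j, ∑ c, ‖A i j‖ * ‖B c i‖ * entrySuffixSum (fun z => z.val s) u j c i ≤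
      (u.length + 1) * (2 * √(Fintype.card I)) := by
  calc ∑ j, ∑ c, ‖A i j‖ * ‖B c i‖ * entrySuffixSum (fun z => z.val s) u j c i
      = ∑ k ∈ Finset.range (u.length + 1), ∑ j, ∑ c, ‖A i j‖ * ‖B c i‖ *
          (‖wordProd (u.drop k) s j i‖ + ‖wordProd (u.drop k) s c i‖) := by
        simp only [entrySuffixSum, Finset.mul_sum]
        exact (Finset.sum_congr rfl fun j _ => Finset.sum_comm).trans Finset.sum_comm
    _ ≤ ∑ k ∈ Finset.range (u.length + 1), 2 * √(Fintype.card I) :=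
        Finset.sum_le_sum fun k _ => sum_sum_mul_mul_add_le (fun _ => norm_nonneg _)
          (fun _ => norm_nonneg _) (sum_norm_sq_row_le_one hA i) (sum_norm_sq_col_le_one hB i)
          (sum_norm_sq_col_le_one
            (norm_wordProd_le_one (fun z hz => hu z (List.mem_of_mem_drop hz)) s) i)
    _ = _ := by simp

lemma sum_sum_mul_entryPrefixSum_mul_entrySuffixSum_le (hy : IsSwapLetter β θ y)
    (hu : ∀ z ∈ u, IsSwapLetter β θ z) {A : Matrix I I 𝕜} (hA : ‖A‖ ≤ 1) (s : S) (i : I) :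
    ∑ j, ∑ c, ‖A i j‖ * entryPrefixSum (fun z => z.val s) (y.val s) u j c *
        entrySuffixSum (fun z => z.val s) u j c i ≤
      (u.length + 1) * (2 * √(Fintype.card I) * (u.length + 1 + prefixDiagSum y u s)) := by
  set m := Finset.range (u.length + 1)
  set X : ℕ → Matrix I I 𝕜 := fun l => wordProd (y :: u.take l) s
  set R : ℕ → Matrix I I 𝕜 := fun k => wordProd (u.drop k) s
  have hX (l) : ‖X l‖ ≤ 1 := norm_wordProd_le_one
    (List.forall_mem_cons.2 ⟨hy, fun z hz => hu z (List.mem_of_mem_take hz)⟩) s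
  have hR (k) : ‖R k‖ ≤ 1 :=
    norm_wordProd_le_one (fun z hz => hu z (List.mem_of_mem_drop hz)) s
  calc ∑ j, ∑ c, ‖A i j‖ * entryPrefixSum (fun z => z.val s) (y.val s) u j c *
        entrySuffixSum (fun z => z.val s) u j c i
      = ∑ k ∈ m, ∑ l ∈ m, ∑ j, ∑ c,
          ‖A i j‖ * (‖X l c j‖ + ‖X l c c‖) * (‖R k j i‖ + ‖R k c i‖) := by
        simp only [entryPrefixSum, entrySuffixSum, Finset.mul_sum, Finset.sum_mul]
        refine ((Finset.sum_congr rfl fun j _ => Finset.sum_comm).trans Finset.sum_comm).trans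
          (Finset.sum_congr rfl fun k _ => ?_)
        exact (Finset.sum_congr rfl fun j _ => Finset.sum_comm).trans Finset.sum_comm
    _ ≤ ∑ k ∈ m, ∑ l ∈ m, 2 * √(Fintype.card I) * (1 + diagNorm (y :: u.take l) s) :=
        Finset.sum_le_sum fun k _ => Finset.sum_le_sum fun l _ =>
          sum_sum_mul_add_mul_add_le (X := fun c j => ‖X l c j‖) (fun _ => norm_nonneg _)
            (fun _ => norm_nonneg _) (fun _ _ => norm_nonneg _) (sum_norm_sq_row_le_one hA i)
            (sum_norm_sq_col_le_one (hR k) i) (sum_norm_sq_col_le_one (hX l))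
    _ = _ := by
        simp only [← Finset.mul_sum, Finset.sum_add_distrib, Finset.sum_const, m,
          Finset.card_range, nsmul_eq_mul, prefixDiagSum]
        push_cast
        ring

lemma sum_sum_swapError_le (hx : IsSwapLetter β θ x) (hy : IsSwapLetter β θ y)
    (hu : ∀ z ∈ u, IsSwapLetter β θ z) (s : S) (i : I) :
    ∑ j, ∑ c, swapError x y u s i j c ≤
      √(Fintype.card I) *
        (56 * (u.length + 1) ^ 2 + 32 * (u.length + 1) * prefixDiagSum y u s) := by
  have hyu : ∀ z ∈ y :: u, IsSwapLetter β θ z := List.forall_mem_cons.2 ⟨hy, hu⟩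
  have hword := sum_sum_mul_entrySuffixSum_le (List.forall_mem_cons.2 ⟨hx, hyu⟩)
    (hx.norm_le_one s) (norm_wordProd_le_one hyu s) s i
  have htail := sum_sum_mul_entryPrefixSum_mul_entrySuffixSum_le hy hu (hx.norm_le_one s) s i
  simp only [swapError, Finset.sum_add_distrib, ← Finset.mul_sum]
  rw [List.length_cons, List.length_cons] at hword
  push_cast at hword
  have hm : 0 ≤ √(Fintype.card I : ℝ) * (u.length * (3 * u.length + 5)) := by positivity
  nlinarith

lemma sum_norm_sq_diag_eq_sum_kernel_mul_swapTerm [Fintype S] {W : I → I → ℝ}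
    (hW : ∀ j, ∑ c, W j c = 1) (σ : I → I → Equiv.Perm S) (x : Letter 𝕜 I ι S)
    (v : List (Letter 𝕜 I ι S)) (i : I) :
    ((∑ s, ‖wordProd (x :: v) s i i‖ ^ 2 : ℝ) : 𝕜) =
      ∑ s, ∑ j, ∑ c, (W j c : 𝕜) * swapTerm x v (σ j c s) i j j := by
  rw [← sum_sum_eq_sum_kernel_mul_perm hW σ (fun j s => swapTerm x v s i j j), RCLike.ofReal_sum]
  refine Finset.sum_congr rfl fun s _ => ?_
  simp only [swapTerm]
  rw [RCLike.ofReal_pow, ← RCLike.conj_mul, ← Finset.mul_sum, ← Matrix.mul_apply, ← wordProd_cons]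

lemma norm_sum_kernel_mul_swapTerm_le {v : List (Letter 𝕜 I ι S)}
    (hxv : ∀ z ∈ x :: v, IsSwapLetter β θ z) (W : I → I → ℝ) (s : S) (i : I) :
    ‖∑ j, ∑ c, (W j c : 𝕜) * swapTerm x v s i j c‖ ≤
      ‖(x.val s * Matrix.of (fun j c => (W j c : 𝕜)) * wordProd v s) i i‖ := by
  have hfactor : ∑ j, ∑ c, (W j c : 𝕜) * swapTerm x v s i j c = conj (wordProd (x :: v) s i i) *
      (x.val s * Matrix.of (fun j c => (W j c : 𝕜)) * wordProd v s) i i := by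
    rw [Matrix.mul_apply, Finset.sum_comm]
    simp only [Matrix.mul_apply, Matrix.of_apply, Finset.sum_mul, Finset.mul_sum, swapTerm]
    exact Finset.sum_congr rfl fun c _ => Finset.sum_congr rfl fun j _ => by ring
  rw [hfactor, norm_mul, RCLike.norm_conj]
  exact mul_le_of_le_one_left (norm_nonneg _)
    ((norm_entry_le_l2_opNorm _ _ _).trans (norm_wordProd_le_one hxv s))

lemma norm_kernel_mul_swapTerm_sub_le (hx : IsSwapLetter β θ x)
    (hy : IsSwapLetter β θ y) (hu : ∀ z ∈ u, IsSwapLetter β θ z) (hxy : x.color ≠ y.color)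
    {W : I → I → ℝ} {κ ρ : ℝ} (hκ : 0 ≤ κ) (hW : IsBlockKernel β κ ρ W) (s : S) (i j c : I) :
    ‖(W j c : 𝕜) * (swapTerm x (y :: u) (θ y.color j c s) i j j - swapTerm x (y :: u) s i j c)‖ ≤
      κ / Fintype.card I * swapError x y u s i j c := by
  have hyu : ∀ z ∈ y :: u, IsSwapLetter β θ z := List.forall_mem_cons.2 ⟨hy, hu⟩
  have hxyu : ∀ z ∈ x :: y :: u, IsSwapLetter β θ z := List.forall_mem_cons.2 ⟨hx, hyu⟩
  have hnonneg := mul_nonneg (div_nonneg hκ (Nat.cast_nonneg (Fintype.card I)))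
    (swapError_nonneg (x := x) (y := y) (u := u) s i j c)
  obtain hWjc | hWjc := eq_or_ne (W j c) 0
  · simpa [hWjc] using hnonneg
  have hβ := hW.eq_of_ne_zero j c hWjc
  obtain rfl | hjc := eq_or_ne j c
  · simpa [swapTerm, hx.val_of_ne y.color j j s hβ hxy, wordProd_swap_self hxyu,
      wordProd_swap_self hyu] using hnonneg
  · rw [norm_mul, RCLike.norm_ofReal, abs_of_nonneg (hW.nonneg j c)]
    exact mul_le_mul (hW.le_of_ne j c hjc) (norm_swapTerm_swap_sub_le hx hy hu hxy hjc hβ s i)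
      (norm_nonneg _) (by positivity)

lemma sum_norm_sq_diag_cons_cons_le [Fintype S] (hx : IsSwapLetter β θ x)
    (hy : IsSwapLetter β θ y) (hu : ∀ z ∈ u, IsSwapLetter β θ z) (hxy : x.color ≠ y.color)
    {W : I → I → ℝ} {κ ρ : ℝ} (hκ : 0 ≤ κ) (hW : IsBlockKernel β κ ρ W) (i : I) :
    ∑ s, ‖wordProd (x :: y :: u) s i i‖ ^ 2 ≤
      ∑ s, (‖(x.val s * Matrix.of (fun j c => (W j c : 𝕜)) * wordProd (y :: u) s) i i‖ +
        κ / Fintype.card I * ∑ j, ∑ c, swapError x y u s i j c) := by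
  have hxyu : ∀ z ∈ x :: y :: u, IsSwapLetter β θ z := by
    simpa only [List.forall_mem_cons] using ⟨hx, hy, hu⟩
  have hsum : 0 ≤ ∑ s, ‖wordProd (x :: y :: u) s i i‖ ^ 2 := by positivity
  rw [← abs_of_nonneg hsum, ← RCLike.norm_ofReal (K := 𝕜),
    sum_norm_sq_diag_eq_sum_kernel_mul_swapTerm hW.sum_eq_one (θ y.color)]
  refine (norm_sum_le _ _).trans (Finset.sum_le_sum fun s _ => ?_)
  set f : I → I → 𝕜 := fun j c => (W j c : 𝕜) * swapTerm x (y :: u) (θ y.color j c s) i j j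
  set g : I → I → 𝕜 := fun j c => (W j c : 𝕜) * swapTerm x (y :: u) s i j c
  calc ‖∑ j, ∑ c, f j c‖ = ‖∑ j, ∑ c, g j c + ∑ j, ∑ c, (f j c - g j c)‖ := by
        simp only [Finset.sum_sub_distrib, add_sub_cancel]
    _ ≤ ‖∑ j, ∑ c, g j c‖ + ∑ j, ∑ c, ‖f j c - g j c‖ :=
        (norm_add_le _ _).trans (add_le_add_right ((norm_sum_le _ _).trans
          (Finset.sum_le_sum fun j _ => norm_sum_le _ _)) _)
    _ ≤ _ := by
        simp only [Finset.mul_sum]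
        refine add_le_add (norm_sum_kernel_mul_swapTerm_le hxyu W s i)
          (Finset.sum_le_sum fun j _ => Finset.sum_le_sum fun c _ => ?_)
        rw [← mul_sub]
        exact norm_kernel_mul_swapTerm_sub_le hx hy hu hxy hκ hW s i j c

lemma sum_diagNorm_le [Fintype S] {ε : ℝ} (hε : 0 ≤ ε)
    (hu : diagSq u ≤ ε * (Fintype.card S * Fintype.card I)) :
    ∑ s, diagNorm u s ≤ Fintype.card S * (√ε * √(Fintype.card I)) := by
  refine le_of_sq_le_sq ?_ (by positivity)
  calc (∑ s, diagNorm u s) ^ 2 ≤ Fintype.card S * ∑ s, diagNorm u s ^ 2 :=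
        sq_sum_le_card_mul_sum_sq
    _ = Fintype.card S * diagSq u := by
        congr 1
        exact Finset.sum_congr rfl fun s _ => Real.sq_sqrt (by positivity)
    _ ≤ Fintype.card S * (ε * (Fintype.card S * Fintype.card I)) := by gcongr
    _ = (Fintype.card S * (√ε * √(Fintype.card I : ℝ))) ^ 2 := by
        rw [mul_pow, mul_pow, Real.sq_sqrt hε, Real.sq_sqrt (Nat.cast_nonneg _)]
        ring

lemma sum_prefixDiagSum_le [Fintype S] {ε : ℝ} (hε : 0 ≤ ε)
    (hu : ∀ v, v <+: u → diagSq (y :: v) ≤ ε * (Fintype.card S * Fintype.card I)) :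
    ∑ s, prefixDiagSum y u s ≤
      (u.length + 1) * (Fintype.card S * (√ε * √(Fintype.card I))) := by
  unfold prefixDiagSum
  rw [Finset.sum_comm]
  refine (Finset.sum_le_card_nsmul _ _ _ fun k _ =>
    sum_diagNorm_le hε (hu _ (List.take_prefix k u))).trans_eq ?_
  rw [Finset.card_range, nsmul_eq_mul]
  push_cast
  rfl

lemma sum_norm_diag_mul_kernel_mul_le {κ ρ : ℝ} {W : I → I → ℝ} (hρ : 0 ≤ ρ)
    (hW : IsBlockKernel β κ ρ W) {A B : Matrix I I 𝕜} (hA : ‖A‖ ≤ 1) (hB : ‖B‖ ≤ 1) :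
    ∑ i, ‖(A * Matrix.of (fun j c => (W j c : 𝕜)) * B) i i‖ ≤ √ρ * Fintype.card I := by
  have hWsq : ∑ j, ∑ c, ‖Matrix.of (fun j c => (W j c : 𝕜)) j c‖ ^ 2 ≤ ρ * Fintype.card I := by
    simpa using hW.sum_sq_le
  calc ∑ i, ‖(A * Matrix.of (fun j c => (W j c : 𝕜)) * B) i i‖
      ≤ √(ρ * Fintype.card I) * √(Fintype.card I) :=
        (sum_norm_diag_mul_mul_le _ hA hB).trans
          (mul_le_mul_of_nonneg_right (Real.sqrt_le_sqrt hWsq) (Real.sqrt_nonneg _))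
    _ = √ρ * Fintype.card I := by
        rw [Real.sqrt_mul hρ, mul_assoc, Real.mul_self_sqrt (Nat.cast_nonneg _)]

lemma diagSq_cons_cons_le_sum_prefixDiagSum [Fintype S] [Nonempty I] (hx : IsSwapLetter β θ x)
    (hy : IsSwapLetter β θ y) (hu : ∀ z ∈ u, IsSwapLetter β θ z) (hxy : x.color ≠ y.color)
    {W : I → I → ℝ} {κ ρ : ℝ} (hκ : 0 ≤ κ) (hρ : 0 ≤ ρ) (hW : IsBlockKernel β κ ρ W) :
    diagSq (x :: y :: u) ≤
      ∑ s, (√ρ * Fintype.card I + κ * (√(Fintype.card I) *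
        (56 * (u.length + 1) ^ 2 + 32 * (u.length + 1) * prefixDiagSum y u s))) := by
  have hyu : ∀ z ∈ y :: u, IsSwapLetter β θ z := List.forall_mem_cons.2 ⟨hy, hu⟩
  have hI : (0 : ℝ) < Fintype.card I := Nat.cast_pos.2 Fintype.card_pos
  calc diagSq (x :: y :: u) = ∑ i, ∑ s, ‖wordProd (x :: y :: u) s i i‖ ^ 2 := Finset.sum_comm
    _ ≤ ∑ i, ∑ s, (‖(x.val s * Matrix.of (fun j c => (W j c : 𝕜)) * wordProd (y :: u) s) i i‖ +
          κ / Fintype.card I * ∑ j, ∑ c, swapError x y u s i j c) :=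
        Finset.sum_le_sum fun i _ => sum_norm_sq_diag_cons_cons_le hx hy hu hxy hκ hW i
    _ ≤ _ := by
        rw [Finset.sum_comm]
        refine Finset.sum_le_sum fun s _ => ?_
        rw [Finset.sum_add_distrib, ← Finset.mul_sum, div_mul_eq_mul_div]
        refine add_le_add
          (sum_norm_diag_mul_kernel_mul_le hρ hW (hx.norm_le_one s) (norm_wordProd_le_one hyu s))
          ((div_le_iff₀ hI).2 ?_)
        rw [mul_assoc]
        refine mul_le_mul_of_nonneg_left ((Finset.sum_le_card_nsmul _ _ _ fun i _ =>
          sum_sum_swapError_le hx hy hu s i).trans_eq ?_) hκ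
        rw [Finset.card_univ, nsmul_eq_mul, mul_comm]

lemma diagSq_cons_cons_le [Fintype S] [Nonempty I] (hx : IsSwapLetter β θ x)
    (hy : IsSwapLetter β θ y) (hu : ∀ z ∈ u, IsSwapLetter β θ z) (hxy : x.color ≠ y.color)
    {W : I → I → ℝ} {κ ρ ε : ℝ} (hκ : 0 ≤ κ) (hρ : 0 ≤ ρ) (hε : 0 ≤ ε)
    (hW : IsBlockKernel β κ ρ W)
    (hprefix : ∀ v, v <+: u → diagSq (y :: v) ≤ ε * (Fintype.card S * Fintype.card I)) :
    diagSq (x :: y :: u) ≤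
      (√ρ + 56 * (u.length + 1) ^ 2 * (κ * (1 / √(Fintype.card I) + √ε))) *
        (Fintype.card S * Fintype.card I) := by
  set r : ℝ := √(Fintype.card I) with hr
  have hr0 : 0 < r := Real.sqrt_pos.2 (Nat.cast_pos.2 Fintype.card_pos)
  have hI : (Fintype.card I : ℝ) = r * r := (Real.mul_self_sqrt (Nat.cast_nonneg _)).symm
  calc diagSq (x :: y :: u)
      ≤ (√ρ * (r * r) + 56 * (u.length + 1) ^ 2 * (κ * r)) * Fintype.card S +
          32 * (u.length + 1) * (κ * r) * ∑ s, prefixDiagSum y u s := by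
        refine (diagSq_cons_cons_le_sum_prefixDiagSum hx hy hu hxy hκ hρ hW).trans_eq ?_
        rw [← hr, hI]
        simp only [mul_add, Finset.sum_add_distrib, ← Finset.mul_sum, Finset.sum_const,
          Finset.card_univ, nsmul_eq_mul]
        ring
    _ ≤ (√ρ * (r * r) + 56 * (u.length + 1) ^ 2 * (κ * r)) * Fintype.card S +
          56 * (u.length + 1) * (κ * r) * ((u.length + 1) * (Fintype.card S * (√ε * r))) := by
        gcongr
        · exact Finset.sum_nonneg fun s _ => Finset.sum_nonneg fun k _ => Real.sqrt_nonneg _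
        · norm_num
        · exact sum_prefixDiagSum_le hε hprefix
    _ = (√ρ + 56 * (u.length + 1) ^ 2 * (κ * (1 / r + √ε))) *
          (Fintype.card S * Fintype.card I) := by
        rw [hI]
        field_simp
        ring

end Step

/-! ### Induction on the length of the word -/

section Induction

open scoped Topology

lemma exists_step_parameters (q K : ℝ) {ε : ℝ} (hε : 0 < ε) :
    ∃ η > 0, ∃ ε' > 0, ∀ᶠ N : ℕ in atTop,
      √(q / N + q * η) + K * (η⁻¹ * (1 / √N + √ε')) < ε := by
  have hη : Tendsto (fun η : ℝ => √(q * η)) (𝓝[>] 0) (𝓝 0) := by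
    have hcont : Continuous fun η : ℝ => √(q * η) := by fun_prop
    simpa using (hcont.tendsto 0).mono_left nhdsWithin_le_nhds
  obtain ⟨η, hηε, hη0⟩ := ((hη.eventually (gt_mem_nhds hε)).and self_mem_nhdsWithin).exists
  have hε' : Tendsto (fun ε' : ℝ => √(q * η) + K * (η⁻¹ * √ε')) (𝓝[>] 0) (𝓝 √(q * η)) := by
    have hcont : Continuous fun ε' : ℝ => √(q * η) + K * (η⁻¹ * √ε') := by fun_prop
    simpa using (hcont.tendsto 0).mono_left nhdsWithin_le_nhds
  obtain ⟨ε', hεε', hε'0⟩ := ((hε'.eventually (gt_mem_nhds hηε)).and self_mem_nhdsWithin).exists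
  refine ⟨η, hη0, ε', hε'0, Tendsto.eventually_lt_const hεε' ?_⟩
  have hcast : Tendsto (fun N : ℕ => (N : ℝ)) atTop atTop := tendsto_natCast_atTop_atTop
  simpa using ((hcast.const_div_atTop q).add_const (q * η)).sqrt.add
    (((((Real.tendsto_sqrt_atTop.comp hcast).const_div_atTop 1).add_const √ε').const_mul
      η⁻¹).const_mul K)

universe u

variable {𝕜 ι Q : Type*} [RCLike 𝕜]

lemma diagSq_singleton {I S : Type*} [Fintype I] [DecidableEq I] [Fintype S] {β : I → Q}
    {θ : ι → I → I → Equiv.Perm S} {x : Letter 𝕜 I ι S} (hx : IsSwapLetter β θ x) :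
    diagSq [x] = 0 := by
  simp [diagSq, wordProd, hx.diag_eq_zero]

variable (𝕜 ι Q) in
lemma eventually_diagSq_le [Finite Q] (n : ℕ) :
    ∀ ε > 0, ∀ᶠ N : ℕ in atTop, ∀ (β : Fin N → Q) (S : Type u) [Fintype S]
      (θ : ι → Fin N → Fin N → Equiv.Perm S) (u : List (Letter 𝕜 (Fin N) ι S)),
      u.length = n → u ≠ [] → u.IsChain (fun x y => x.color ≠ y.color) →
      (∀ x ∈ u, IsSwapLetter β θ x) → diagSq u ≤ ε * (Fintype.card S * N) := by
  cases nonempty_fintype Q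
  induction n using Nat.strong_induction_on with
  | _ n ih =>
    intro ε hε
    obtain ⟨η, hη, ε', hε', hstep⟩ :=
      exists_step_parameters (Fintype.card Q) (56 * (n : ℝ) ^ 2) hε
    have hshorter := (Finset.eventually_all (Finset.range n)).2
      fun m hm => ih m (Finset.mem_range.1 hm) ε' hε'
    filter_upwards [hstep, hshorter, eventually_ne_atTop 0] with N hstep hshorter hN
    intro β S _ θ u hlength hne hchain hu
    have : NeZero N := ⟨hN⟩
    match u, hne with
    | [x], _ =>
      rw [diagSq_singleton (hu x List.mem_cons_self)]
      positivity
    | x :: y :: u, _ =>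
      obtain ⟨hx, hy, hu'⟩ : IsSwapLetter β θ x ∧ IsSwapLetter β θ y ∧
        ∀ z ∈ u, IsSwapLetter β θ z := by simpa using hu
      have hn : u.length + 2 = n := hlength
      rw [List.isChain_cons_cons] at hchain
      have hprefix : ∀ v, v <+: u → diagSq (y :: v) ≤ ε' * (Fintype.card S * N) := fun v hv =>
        have hyv : y :: v <+: y :: u := (List.prefix_cons_inj y).2 hv
        hshorter (v.length + 1) (Finset.mem_range.2 (by have := hv.length_le; omega)) β S θ
          (y :: v) rfl (List.cons_ne_nil _ _) (hchain.2.prefix hyv)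
          fun z hz => hu z (List.mem_cons_of_mem _ (hyv.subset hz))
      have hW := isBlockKernel_blockKernel β hη
      rw [Fintype.card_fin] at hW
      calc diagSq (x :: y :: u)
          ≤ (√(Fintype.card Q / N + Fintype.card Q * η) +
              56 * (u.length + 1) ^ 2 * (η⁻¹ * (1 / √N + √ε'))) * (Fintype.card S * N) := by
            simpa only [Fintype.card_fin] using diagSq_cons_cons_le hx hy hu' hchain.1
              (inv_nonneg.2 hη.le) (by positivity) hε'.le hW (by simpa only [Fintype.card_fin])
        _ ≤ ε * (Fintype.card S * N) := by
            refine mul_le_mul_of_nonneg_right (le_trans ?_ hstep.le) (by positivity)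
            gcongr
            exact_mod_cast (by omega : u.length + 1 ≤ n)

end Induction

/-! ### Perturbation estimates -/

section Perturbation

variable {R : Type*} [SeminormedRing R] {m : ℕ} {f g : Fin m → R} {B e : ℝ}

lemma norm_prod_ofFn_le (hone : ‖(1 : R)‖ ≤ 1) (hB : 0 ≤ B) (hf : ∀ i, ‖f i‖ ≤ B) :
    ‖(List.ofFn f).prod‖ ≤ B ^ m := by
  induction m with
  | zero => simpa using hone
  | succ m ih =>
    rw [List.ofFn_succ, List.prod_cons, pow_succ']
    exact (norm_mul_le _ _).trans (mul_le_mul (hf 0) (ih fun i => hf i.succ) (norm_nonneg _) hB)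

lemma norm_prod_ofFn_sub_le (hone : ‖(1 : R)‖ ≤ 1) (hB : 1 ≤ B) (he : 0 ≤ e)
    (hf : ∀ i, ‖f i‖ ≤ B) (hg : ∀ i, ‖g i‖ ≤ B) (hfg : ∀ i, ‖f i - g i‖ ≤ e) :
    ‖(List.ofFn f).prod - (List.ofFn g).prod‖ ≤ m * B ^ m * e := by
  have hB0 : 0 ≤ B := zero_le_one.trans hB
  induction m with
  | zero => simp
  | succ m ih =>
    rw [List.ofFn_succ, List.ofFn_succ, List.prod_cons, List.prod_cons]
    set F := (List.ofFn fun i : Fin m => f i.succ).prod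
    set G := (List.ofFn fun i : Fin m => g i.succ).prod
    have hF : ‖F‖ ≤ B ^ m := norm_prod_ofFn_le hone hB0 fun i => hf i.succ
    have hFG : ‖F - G‖ ≤ m * B ^ m * e :=
      ih (fun i => hf i.succ) (fun i => hg i.succ) fun i => hfg i.succ
    calc ‖f 0 * F - g 0 * G‖ = ‖(f 0 - g 0) * F + g 0 * (F - G)‖ := by
          congr 1
          noncomm_ring
      _ ≤ e * B ^ m + B * (m * B ^ m * e) :=
          norm_add_le_of_le (norm_mul_le_of_le (hfg 0) hF) (norm_mul_le_of_le (hg 0) hFG)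
      _ ≤ e * B ^ (m + 1) + B * (m * B ^ m * e) := by
          gcongr
          exact m.le_succ
      _ = (m + 1 : ℕ) * B ^ (m + 1) * e := by
          push_cast
          ring

lemma norm_sq_le_two_mul_add {E : Type*} [SeminormedAddCommGroup E] {x y : E}
    (hxy : ‖x - y‖ ≤ e) : ‖x‖ ^ 2 ≤ 2 * ‖y‖ ^ 2 + 2 * e ^ 2 :=
  calc ‖x‖ ^ 2 ≤ (‖y‖ + e) ^ 2 := by
        have hx : ‖x‖ ≤ ‖y‖ + e := (norm_le_norm_add_norm_sub' x y).trans (by gcongr)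
        gcongr
    _ ≤ 2 * ‖y‖ ^ 2 + 2 * e ^ 2 := by linarith [add_sq_le (a := ‖y‖) (b := e)]

end Perturbation

/-! ### Centred products -/

section CentredProd

open scoped Matrix.Norms.L2Operator

variable {N n : ℕ}

lemma dproj_eq_diagonal (M : Matrix (Fin N) (Fin N) ℂ) :
    dproj M = Matrix.diagonal fun i => M i i := by
  ext i j
  by_cases h : i = j
  · subst h
    simp [dproj]
  · simp [dproj, h]

lemma dproj_sub (M M' : Matrix (Fin N) (Fin N) ℂ) : dproj (M - M') = dproj M - dproj M' := by
  simp [dproj_eq_diagonal]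

lemma dproj_submatrix (M : Matrix (Fin N) (Fin N) ℂ) (σ : Equiv.Perm (Fin N)) :
    dproj (M.submatrix σ σ) = (dproj M).submatrix σ σ := by
  ext i j
  simp [dproj]

lemma norm_dproj_le (M : Matrix (Fin N) (Fin N) ℂ) : ‖dproj M‖ ≤ ‖M‖ := by
  rw [dproj_eq_diagonal, Matrix.l2_opNorm_diagonal]
  exact (pi_norm_le_iff_of_nonneg (norm_nonneg _)).2 fun i => norm_entry_le_l2_opNorm M i i

lemma norm_sub_dproj_le {M : Matrix (Fin N) (Fin N) ℂ} {B : ℝ} (hM : ‖M‖ ≤ B) :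
    ‖M - dproj M‖ ≤ 2 * B :=
  (norm_sub_le_of_le hM ((norm_dproj_le M).trans hM)).trans_eq (two_mul B).symm

lemma norm_centeredProd_le {M : Fin n → Matrix (Fin N) (Fin N) ℂ} {B : ℝ} (hB : 0 ≤ B)
    (hM : ∀ i, ‖M i‖ ≤ B) : ‖centeredProd M‖ ≤ (2 * B) ^ n :=
  norm_prod_ofFn_le l2_opNorm_one_le (by positivity) fun i => norm_sub_dproj_le (hM i)

lemma norm_centeredProd_sub_le {M M' : Fin n → Matrix (Fin N) (Fin N) ℂ} {B e : ℝ}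
    (hB : 1 ≤ B) (he : 0 ≤ e) (hM : ∀ i, ‖M i‖ ≤ B) (hM' : ∀ i, ‖M' i‖ ≤ B)
    (hMM' : ∀ i, ‖M i - M' i‖ ≤ e) :
    ‖centeredProd M - centeredProd M'‖ ≤ n * (2 * B) ^ n * (2 * e) := by
  refine norm_prod_ofFn_sub_le l2_opNorm_one_le (by linarith) (by positivity)
    (fun i => norm_sub_dproj_le (hM i)) (fun i => norm_sub_dproj_le (hM' i)) fun i => ?_
  rw [sub_sub_sub_comm, ← dproj_sub]
  exact norm_sub_dproj_le (hMM' i)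

variable {ι Q : Type*}

/-- The permutation of the states `σ : ι → Equiv.Perm (Fin N)` which composes `σ ℓ` with the
transposition of `j` and `c`. -/
def swapState (ℓ : ι) (j c : Fin N) : Equiv.Perm (ι → Equiv.Perm (Fin N)) :=
  Equiv.mulRight (Pi.mulSingle ℓ (Equiv.swap j c))

/-- The centred matrix `M - ΔM`, where `M` depends on the `ℓ`-th of a family of permutations, as a
letter of colour `ℓ`. It is normalised to be a contraction when `‖M‖ ≤ B`. -/
def centeredLetter (B : ℝ) (ℓ : ι) (M : Equiv.Perm (Fin N) → Matrix (Fin N) (Fin N) ℂ) :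
    Letter ℂ (Fin N) ι (ι → Equiv.Perm (Fin N)) where
  color := ℓ
  val σ := (2 * B)⁻¹ • (M (σ ℓ) - dproj (M (σ ℓ)))

/-- Right multiplication of the permutation by a transposition within a fibre of `β` conjugates the
matrix by that transposition. -/
def IsSwapEquivariant (β : Fin N → Q) (M : Equiv.Perm (Fin N) → Matrix (Fin N) (Fin N) ℂ) : Prop :=
  ∀ τ j c, β j = β c →
    M (τ * Equiv.swap j c) = (M τ).submatrix (Equiv.swap j c) (Equiv.swap j c)

lemma isSwapLetter_centeredLetter {β : Fin N → Q} {B : ℝ}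
    {M : Equiv.Perm (Fin N) → Matrix (Fin N) (Fin N) ℂ} (hM : ∀ τ, ‖M τ‖ ≤ B)
    (hswap : IsSwapEquivariant β M) (ℓ : ι) :
    IsSwapLetter β swapState (centeredLetter B ℓ M) where
  norm_le_one σ := by
    have hB : 0 ≤ 2 * B := mul_nonneg zero_le_two ((norm_nonneg _).trans (hM 1))
    rw [centeredLetter, norm_smul, norm_inv, Real.norm_of_nonneg hB]
    exact inv_mul_le_one_of_le₀ (norm_sub_dproj_le (hM (σ ℓ))) hB
  diag_eq_zero σ i := by simp [centeredLetter, dproj]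
  val_of_eq := by
    rintro _ j c σ hjc rfl
    have hσ : swapState ℓ j c σ ℓ = σ ℓ * Equiv.swap j c := by simp [swapState]
    simp only [centeredLetter, hσ, hswap _ _ _ hjc, dproj_submatrix]
    rfl
  val_of_ne ℓ' j c σ _ hne := by
    have hσ : swapState ℓ' j c σ ℓ = σ ℓ := by
      simp [swapState, Pi.mulSingle_eq_of_ne (show ℓ ≠ ℓ' from hne)]
    simp only [centeredLetter, hσ]

lemma wordProd_ofFn_centeredLetter (B : ℝ) (ℓv : Fin n → ι)
    (M : Fin n → Equiv.Perm (Fin N) → Matrix (Fin N) (Fin N) ℂ) (σ : ι → Equiv.Perm (Fin N)) :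
    wordProd (List.ofFn fun i => centeredLetter B (ℓv i) (M i)) σ =
      (2 * B)⁻¹ ^ n • centeredProd fun i => M i (σ (ℓv i)) := by
  have h := List.smul_prod (List.ofFn fun i => M i (σ (ℓv i)) - dproj (M i (σ (ℓv i)))) (2 * B)⁻¹
  rw [List.length_ofFn, List.map_ofFn] at h
  rw [wordProd, List.map_ofFn, centeredProd, h]
  rfl

lemma eventually_sum_norm_sq_diag_centeredProd_le [Fintype ι] [Finite Q] (hn : n ≠ 0)
    {ℓv : Fin n → ι} (hℓv : (List.ofFn ℓv).IsChain (· ≠ ·)) {B ε : ℝ} (hB : 0 < B)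
    (hε : 0 < ε) :
    ∀ᶠ N : ℕ in atTop, ∀ (β : Fin N → Q)
      (M : Fin n → Equiv.Perm (Fin N) → Matrix (Fin N) (Fin N) ℂ),
      (∀ i τ, ‖M i τ‖ ≤ B) → (∀ i, IsSwapEquivariant β (M i)) →
      ∑ σ : ι → Equiv.Perm (Fin N), ∑ x, ‖centeredProd (fun i => M i (σ (ℓv i))) x x‖ ^ 2 ≤
        ε * (Fintype.card (ι → Equiv.Perm (Fin N)) * N) := by
  set b := ((2 * B)⁻¹ ^ n) ^ 2 with hb
  have hb0 : 0 < b := by positivity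
  filter_upwards [eventually_diagSq_le ℂ ι Q n (b * ε) (by positivity)] with N hN β M hM hswap
  set u := List.ofFn fun i => centeredLetter B (ℓv i) (M i) with hu
  have hword : diagSq u ≤ b * ε * (Fintype.card (ι → Equiv.Perm (Fin N)) * N) := by
    refine hN β _ swapState u (List.length_ofFn) (by simpa [hu] using hn) ?_ ?_
    · exact List.isChain_ofFn.2 (List.isChain_ofFn.1 hℓv)
    · simpa only [hu, List.forall_mem_ofFn_iff] using
        fun i => isSwapLetter_centeredLetter (hM i) (hswap i) (ℓv i)
  have hscale : diagSq u = b * ∑ σ : ι → Equiv.Perm (Fin N), ∑ x,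
      ‖centeredProd (fun i => M i (σ (ℓv i))) x x‖ ^ 2 := by
    simp only [diagSq, hu, wordProd_ofFn_centeredLetter, Matrix.smul_apply, norm_smul, mul_pow,
      ← Finset.mul_sum, Real.norm_eq_abs, sq_abs, hb]
  rw [hscale, mul_assoc] at hword
  exact le_of_mul_le_mul_left hword hb0

end CentredProd

/-! ### Monomials with diagonal coefficients -/

section Monomials

open scoped Matrix.Norms.L2Operator

variable {K : Type} {N n d m : ℕ} {a : K → Matrix (Fin N) (Fin N) ℂ} {k : ℕ → K}
  {D D' : ℕ → Matrix (Fin N) (Fin N) ℂ} {R e : ℝ}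

lemma monomialEval_eq_prod_ofFn (a : K → Matrix (Fin N) (Fin N) ℂ) (d : ℕ) (k : ℕ → K)
    (D : ℕ → Matrix (Fin N) (Fin N) ℂ) :
    monomialEval a d k D =
      (List.ofFn (Fin.cons (D 0) fun j : Fin d => a (k (j + 1)) * D (j + 1))).prod := by
  rw [List.ofFn_cons, List.prod_cons, monomialEval]

lemma norm_monomialEval_factor_le (hR : 1 ≤ R) (ha : ∀ j, ‖a (k j)‖ ≤ R) (hD : ∀ j, ‖D j‖ ≤ R)
    (i : Fin (d + 1)) :
    ‖(Fin.cons (D 0) fun j : Fin d => a (k (j + 1)) * D (j + 1) :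
      Fin (d + 1) → Matrix (Fin N) (Fin N) ℂ) i‖ ≤ R ^ 2 := by
  refine Fin.cases ((hD 0).trans (le_self_pow₀ hR two_ne_zero)) (fun j => ?_) i
  rw [Fin.cons_succ, sq]
  exact norm_mul_le_of_le (ha _) (hD _)

lemma norm_monomialEval_le (hR : 1 ≤ R) (hd : d ≤ m) (ha : ∀ j, ‖a (k j)‖ ≤ R)
    (hD : ∀ j, ‖D j‖ ≤ R) : ‖monomialEval a d k D‖ ≤ (R ^ 2) ^ (m + 1) := by
  rw [monomialEval_eq_prod_ofFn]
  exact (norm_prod_ofFn_le l2_opNorm_one_le (sq_nonneg R)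
    (norm_monomialEval_factor_le hR ha hD)).trans
      (pow_le_pow_right₀ (one_le_pow₀ hR) (Nat.succ_le_succ hd))

lemma norm_monomialEval_sub_le (hR : 1 ≤ R) (he : 0 ≤ e) (hd : d ≤ m) (ha : ∀ j, ‖a (k j)‖ ≤ R)
    (hD : ∀ j, ‖D j‖ ≤ R) (hD' : ∀ j, ‖D' j‖ ≤ R) (hDD' : ∀ j ≤ d, ‖D j - D' j‖ ≤ e) :
    ‖monomialEval a d k D - monomialEval a d k D'‖ ≤
      (m + 1) * (R ^ 2) ^ (m + 1) * (R * e) := by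
  have hR0 : 0 ≤ R := zero_le_one.trans hR
  have hR2 : 1 ≤ R ^ 2 := one_le_pow₀ hR
  rw [monomialEval_eq_prod_ofFn, monomialEval_eq_prod_ofFn]
  refine (norm_prod_ofFn_sub_le l2_opNorm_one_le hR2 (mul_nonneg hR0 he)
    (norm_monomialEval_factor_le hR ha hD) (norm_monomialEval_factor_le hR ha hD')
    fun i => ?_).trans ?_
  · refine Fin.cases ?_ (fun j => ?_) i
    · exact (hDD' 0 d.zero_le).trans (le_mul_of_one_le_left he hR)
    · rw [Fin.cons_succ, Fin.cons_succ, ← mul_sub]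
      exact norm_mul_le_of_le (ha _) (hDD' _ j.isLt)
  · push_cast
    gcongr

lemma monomialEval_submatrix {σ : Equiv.Perm (Fin N)} (hD : ∀ j, (D j).submatrix σ σ = D j) :
    monomialEval (fun k => (a k).submatrix σ σ) d k D =
      (monomialEval a d k D).submatrix σ σ := by
  have hσ : ∀ M, Matrix.reindexAlgEquiv ℂ ℂ σ.symm M = M.submatrix σ σ := fun M => rfl
  unfold monomialEval
  rw [← hσ, map_mul, map_list_prod, List.map_ofFn, hσ, hD]
  congr 3
  funext j
  rw [Function.comp_apply, map_mul, hσ, hσ, hD]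

lemma l2_opNorm_submatrix_perm_le (M : Matrix (Fin N) (Fin N) ℂ) (σ : Equiv.Perm (Fin N)) :
    ‖M.submatrix σ σ‖ ≤ ‖M‖ := by
  have hM : M.submatrix σ σ = σ.permMatrix ℂ * M * (σ⁻¹).permMatrix ℂ := by
    rw [Equiv.Perm.permMatrix, Equiv.Perm.permMatrix, PEquiv.toMatrix_toPEquiv_mul,
      PEquiv.mul_toMatrix_toPEquiv, Matrix.submatrix_submatrix]
    rfl
  calc ‖M.submatrix σ σ‖ ≤ 1 * ‖M‖ * 1 := by
        rw [hM]
        exact norm_mul_le_of_le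
          (norm_mul_le_of_le (Matrix.permMatrix_l2_opNorm_le _) le_rfl)
          (Matrix.permMatrix_l2_opNorm_le _)
    _ = ‖M‖ := by rw [one_mul, mul_one]

lemma isSwapEquivariant_monomialEval {Q : Type*} (a : K → Matrix (Fin N) (Fin N) ℂ) (d : ℕ)
    (k : ℕ → K) (β : Fin N → Q) (v : ℕ → Q → ℂ) :
    IsSwapEquivariant β fun τ => monomialEval (fun k => (a k).submatrix τ τ) d k
      fun j => Matrix.diagonal (v j ∘ β) := by
  intro τ j c hjc
  refine Eq.trans ?_ (monomialEval_submatrix fun i => ?_)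
  · simp only [Matrix.submatrix_submatrix]
    rfl
  · have hβ : β ∘ Equiv.swap j c = β := by
      rw [Equiv.comp_swap_eq_update, hjc, Function.update_eq_self, ← hjc, Function.update_eq_self]
    rw [Matrix.submatrix_diagonal_equiv, Function.comp_assoc, hβ]

lemma exists_finite_block_approx (J : Type) [Finite J] (R : ℝ) (he : 0 < e) :
    ∃ (Q : Type) (_ : Finite Q) (v : J → Q → ℂ), (∀ j q, ‖v j q‖ ≤ R) ∧
      ∀ {I : Type} (f : J → I → ℂ), (∀ j x, ‖f j x‖ ≤ R) →
        ∃ β : I → Q, ∀ j x, ‖f j x - v j (β x)‖ ≤ e := by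
  obtain ⟨t, ht, htfin, hcover⟩ :=
    (isCompact_closedBall (0 : ℂ) R).finite_cover_balls he
  have : Finite t := htfin
  refine ⟨J → t, inferInstance, fun j q => q j,
    fun j q => mem_closedBall_zero_iff.1 (ht (q j).2), fun f hf => ?_⟩
  have hnear : ∀ x j, ∃ z : t, ‖f j x - z‖ ≤ e := fun x j => by
    obtain ⟨z, hz, hfz⟩ := Set.mem_iUnion₂.1 (hcover (mem_closedBall_zero_iff.2 (hf j x)))
    exact ⟨⟨z, hz⟩, (mem_ball_iff_norm.1 hfz).le⟩
  choose β hβ using hnear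
  exact ⟨β, fun j x => hβ x j⟩

lemma exists_finite_blockDiagonal_approx (n m : ℕ) (hR : 0 ≤ R) (he : 0 < e) :
    ∃ (Q : Type) (_ : Finite Q) (v : Fin n → ℕ → Q → ℂ),
      ∀ {N : ℕ} (D : Fin n → ℕ → Matrix (Fin N) (Fin N) ℂ), (∀ i j, (D i j).IsDiag) →
        (∀ i j, ‖D i j‖ ≤ R) → ∃ β : Fin N → Q, ∀ i,
          (∀ j, ‖Matrix.diagonal (v i j ∘ β)‖ ≤ R) ∧
          ∀ j ≤ m, ‖D i j - Matrix.diagonal (v i j ∘ β)‖ ≤ e := by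
  obtain ⟨Q, hQ, v, hv, happrox⟩ := exists_finite_block_approx (Fin n × Fin (m + 1)) R he
  refine ⟨Q, hQ, fun i j => v (i, Fin.ofNat (m + 1) j), fun D hdiag hD => ?_⟩
  obtain ⟨β, hβ⟩ := happrox (fun ij x => D ij.1 ij.2 x x)
    fun ij x => (norm_entry_le_l2_opNorm _ x x).trans (hD _ _)
  refine ⟨β, fun i => ⟨fun j => ?_, fun j hj => ?_⟩⟩
  · rw [Matrix.l2_opNorm_diagonal]
    exact (pi_norm_le_iff_of_nonneg hR).2 fun x => hv _ _
  · rw [← (hdiag i j).diagonal_diag, Matrix.diagonal_sub, Matrix.l2_opNorm_diagonal]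
    refine (pi_norm_le_iff_of_nonneg he.le).2 fun x => ?_
    simpa [Nat.mod_eq_of_lt (Nat.lt_succ_of_le hj)] using hβ (i, Fin.ofNat (m + 1) j) x

/-- The centred product of the monomials with degrees `d i`, indices `k i` and coefficients `D i`,
each evaluated at its own family `a i`. -/
def centeredMonomialProd (d : Fin n → ℕ) (k : Fin n → ℕ → K)
    (D : Fin n → ℕ → Matrix (Fin N) (Fin N) ℂ) (a : Fin n → K → Matrix (Fin N) (Fin N) ℂ) :
    Matrix (Fin N) (Fin N) ℂ :=
  centeredProd fun i => monomialEval (a i) (d i) (k i) (D i)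

lemma norm_centeredMonomialProd_le {d : Fin n → ℕ} {k : Fin n → ℕ → K}
    {D : Fin n → ℕ → Matrix (Fin N) (Fin N) ℂ} {a : Fin n → K → Matrix (Fin N) (Fin N) ℂ}
    (hR : 1 ≤ R) (hd : ∀ i, d i ≤ m) (hD : ∀ i j, ‖D i j‖ ≤ R) (ha : ∀ i j, ‖a i (k i j)‖ ≤ R) :
    ‖centeredMonomialProd d k D a‖ ≤ (2 * (R ^ 2) ^ (m + 1)) ^ n :=
  norm_centeredProd_le (by positivity) fun i => norm_monomialEval_le hR (hd i) (ha i) (hD i)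

lemma norm_centeredMonomialProd_sub_le {d : Fin n → ℕ} {k : Fin n → ℕ → K}
    {D D' : Fin n → ℕ → Matrix (Fin N) (Fin N) ℂ} {a : Fin n → K → Matrix (Fin N) (Fin N) ℂ}
    (hR : 1 ≤ R) (he : 0 ≤ e) (hd : ∀ i, d i ≤ m) (hD : ∀ i j, ‖D i j‖ ≤ R)
    (hD' : ∀ i j, ‖D' i j‖ ≤ R) (hDD' : ∀ i, ∀ j ≤ m, ‖D i j - D' i j‖ ≤ e)
    (ha : ∀ i j, ‖a i (k i j)‖ ≤ R) :
    ‖centeredMonomialProd d k D a - centeredMonomialProd d k D' a‖ ≤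
      n * (2 * (R ^ 2) ^ (m + 1)) ^ n * (2 * ((m + 1) * (R ^ 2) ^ (m + 1) * R)) * e := by
  refine (norm_centeredProd_sub_le (one_le_pow₀ (one_le_pow₀ hR)) (by positivity)
    (fun i => norm_monomialEval_le hR (hd i) (ha i) (hD i))
    (fun i => norm_monomialEval_le hR (hd i) (ha i) (hD' i))
    fun i => norm_monomialEval_sub_le hR he (hd i) (ha i) (hD i) (hD' i)
      fun j hj => hDD' i j (hj.trans (hd i))).trans_eq ?_
  ring

lemma eventually_sum_norm_sq_diag_centeredMonomialProd_le {ι : Type*} [Fintype ι] (hn : n ≠ 0)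
    {ℓv : Fin n → ι} (hℓv : (List.ofFn ℓv).IsChain (· ≠ ·)) (K : Type) (m : ℕ) (hR : 1 ≤ R)
    {ε : ℝ} (hε : 0 < ε) :
    ∀ᶠ N : ℕ in atTop, ∀ (d : Fin n → ℕ) (k : Fin n → ℕ → K)
      (D : Fin n → ℕ → Matrix (Fin N) (Fin N) ℂ) (a : Fin n → K → Matrix (Fin N) (Fin N) ℂ),
      (∀ i, d i ≤ m) → (∀ i j, (D i j).IsDiag) → (∀ i j, ‖D i j‖ ≤ R) →
      (∀ i j, ‖a i (k i j)‖ ≤ R) →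
      ∑ σ : ι → Equiv.Perm (Fin N), ∑ x, ‖centeredMonomialProd d k D
        (fun i k => (a i k).submatrix (σ (ℓv i)) (σ (ℓv i))) x x‖ ^ 2 ≤
        ε * (Fintype.card (ι → Equiv.Perm (Fin N)) * N) := by
  set B := (R ^ 2) ^ (m + 1)
  obtain ⟨e, he, hce⟩ := exists_pos_mul_lt (half_pos (Real.sqrt_pos.2 hε))
    (n * (2 * B) ^ n * (2 * ((m + 1) * B * R)))
  obtain ⟨Q, _, v, hv⟩ := exists_finite_blockDiagonal_approx n m (zero_le_one.trans hR) he
  filter_upwards [eventually_sum_norm_sq_diag_centeredProd_le (Q := Q) hn hℓv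
    (show 0 < B by positivity) (show 0 < ε / 4 by positivity)] with N hN d k D a hd hdiag hD ha
  obtain ⟨β, hβ⟩ := hv D hdiag hD
  have ha' : ∀ (τ : Equiv.Perm (Fin N)) i j, ‖(a i (k i j)).submatrix τ τ‖ ≤ R := fun τ i j =>
    (l2_opNorm_submatrix_perm_le _ _).trans (ha i j)
  set F := fun (D : Fin n → ℕ → Matrix (Fin N) (Fin N) ℂ) (σ : ι → Equiv.Perm (Fin N)) =>
    centeredMonomialProd d k D fun i k => (a i k).submatrix (σ (ℓv i)) (σ (ℓv i))
  set D' := fun i j => Matrix.diagonal (v i j ∘ β)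
  have hblock : ∑ σ, ∑ x, ‖F D' σ x x‖ ^ 2 ≤
      ε / 4 * (Fintype.card (ι → Equiv.Perm (Fin N)) * N) :=
    hN β (fun i τ => monomialEval (fun k => (a i k).submatrix τ τ) (d i) (k i) (D' i))
      (fun i τ => norm_monomialEval_le hR (hd i) (ha' τ i) (hβ i).1)
      fun i => isSwapEquivariant_monomialEval (a i) (d i) (k i) β (v i)
  have hclose : ∀ σ x, ‖F D σ x x - F D' σ x x‖ ≤ √ε / 2 := fun σ x =>
    (norm_entry_le_l2_opNorm (F D σ - F D' σ) x x).trans <|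
      (norm_centeredMonomialProd_sub_le hR he.le hd hD (fun i => (hβ i).1) (fun i => (hβ i).2)
        fun i => ha' (σ (ℓv i)) i).trans hce.le
  calc ∑ σ, ∑ x, ‖F D σ x x‖ ^ 2
      ≤ ∑ σ, ∑ x, (2 * ‖F D' σ x x‖ ^ 2 + 2 * (√ε / 2) ^ 2) :=
        Finset.sum_le_sum fun σ _ => Finset.sum_le_sum fun x _ =>
          norm_sq_le_two_mul_add (hclose σ x)
    _ = 2 * ∑ σ, ∑ x, ‖F D' σ x x‖ ^ 2 +
          ε / 2 * (Fintype.card (ι → Equiv.Perm (Fin N)) * N) := by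
        simp only [div_pow, Real.sq_sqrt hε.le, Finset.sum_add_distrib, ← Finset.mul_sum,
          Finset.sum_const, Finset.card_univ, Fintype.card_fin, nsmul_eq_mul]
        ring
    _ ≤ ε * (Fintype.card (ι → Equiv.Perm (Fin N)) * N) := by linarith

end Monomials

/-! ### Random permutations -/

namespace EntriesMeasurable

variable {Ω : Type} [MeasurableSpace Ω] {N n : ℕ} {X Y : Ω → Matrix (Fin N) (Fin N) ℂ}

protected lemma const (M : Matrix (Fin N) (Fin N) ℂ) : EntriesMeasurable fun _ : Ω => M :=
  fun _ _ => measurable_const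

protected lemma mul (hX : EntriesMeasurable X) (hY : EntriesMeasurable Y) :
    EntriesMeasurable fun ω => X ω * Y ω := fun i j => by
  simp only [Matrix.mul_apply]
  exact Finset.measurable_fun_sum _ fun l _ => (hX i l).mul (hY l j)

protected lemma sub (hX : EntriesMeasurable X) (hY : EntriesMeasurable Y) :
    EntriesMeasurable fun ω => X ω - Y ω := fun i j => (hX i j).sub (hY i j)

protected lemma dproj (hX : EntriesMeasurable X) : EntriesMeasurable fun ω => dproj (X ω) :=
  fun i j => Measurable.ite (.const _) (hX i j) measurable_const

protected lemma prod_ofFn {X : Fin n → Ω → Matrix (Fin N) (Fin N) ℂ}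
    (hX : ∀ i, EntriesMeasurable (X i)) :
    EntriesMeasurable fun ω => (List.ofFn fun i => X i ω).prod := by
  induction n with
  | zero => exact .const 1
  | succ n ih =>
    simp only [List.ofFn_succ, List.prod_cons]
    exact (hX 0).mul (ih fun i => hX i.succ)

variable {K : Type}

protected lemma monomialEval {a : Ω → K → Matrix (Fin N) (Fin N) ℂ} {k : ℕ → K}
    (ha : ∀ j, EntriesMeasurable fun ω => a ω (k j)) (d : ℕ)
    (D : ℕ → Matrix (Fin N) (Fin N) ℂ) :
    EntriesMeasurable fun ω => monomialEval (a ω) d k D :=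
  (EntriesMeasurable.const _).mul <| .prod_ofFn fun _ => (ha _).mul (.const _)

protected lemma centeredMonomialProd {a : Ω → Fin n → K → Matrix (Fin N) (Fin N) ℂ}
    {k : Fin n → ℕ → K} (ha : ∀ i j, EntriesMeasurable fun ω => a ω i (k i j)) (d : Fin n → ℕ)
    (D : Fin n → ℕ → Matrix (Fin N) (Fin N) ℂ) :
    EntriesMeasurable fun ω => centeredMonomialProd d k D (a ω) :=
  .prod_ofFn fun i => (EntriesMeasurable.monomialEval (ha i) _ _).sub
    (EntriesMeasurable.monomialEval (ha i) _ _).dproj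

end EntriesMeasurable

section RandomPermutations

open scoped Matrix.Norms.L2Operator

variable {Ω K : Type} [MeasurableSpace Ω] {μ : Measure Ω} {N : ℕ}

lemma measurable_famSigma_submatrix (A : K → Ω → Matrix (Fin N) (Fin N) ℂ)
    (σ : Equiv.Perm (Fin N)) :
    Measurable[famSigma A] fun ω k i j => A k ω (σ i) (σ j) := by
  refine @measurable_pi_lambda _ _ _ (famSigma A) _ _ fun k =>
    @measurable_pi_lambda _ _ _ (famSigma A) _ _ fun i =>
    @measurable_pi_lambda _ _ _ (famSigma A) _ _ fun j => Measurable.of_comap_le ?_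
  exact le_iSup_of_le k <| le_iSup_of_le (σ i) <| le_iSup_of_le (σ j) le_rfl

lemma famSigma_le {A : K → Ω → Matrix (Fin N) (Fin N) ℂ} (hA : ∀ k, EntriesMeasurable (A k)) :
    famSigma A ≤ ‹MeasurableSpace Ω› :=
  iSup_le fun k => iSup_le fun i => iSup_le fun j => (hA k i j).comap_le

lemma PermInvariant.identDistrib {A : K → Ω → Matrix (Fin N) (Fin N) ℂ}
    (h : PermInvariant μ A) (hA : ∀ k, EntriesMeasurable (A k)) (σ : Equiv.Perm (Fin N)) :
    IdentDistrib (fun ω k i j => A k ω (σ i) (σ j)) (fun ω k i j => A k ω i j) μ μ where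
  aemeasurable_fst :=
    ((measurable_famSigma_submatrix A σ).mono (famSigma_le hA) le_rfl).aemeasurable
  aemeasurable_snd :=
    ((measurable_famSigma_submatrix A 1).mono (famSigma_le hA) le_rfl).aemeasurable
  map_eq := h σ

lemma iIndepFun_submatrix {ι : Type*} {A : ι → K → Ω → Matrix (Fin N) (Fin N) ℂ}
    (h : iIndep (fun ℓ => famSigma (A ℓ)) μ) (σ : ι → Equiv.Perm (Fin N)) :
    iIndepFun (fun ℓ ω k i j => A ℓ k ω (σ ℓ i) (σ ℓ j)) μ :=
  iIndep_of_iIndep_of_le h fun ℓ => (measurable_famSigma_submatrix (A ℓ) (σ ℓ)).comap_le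

lemma identDistrib_perm_of_iIndep {ι : Type*} [Countable ι]
    {A : ι → K → Ω → Matrix (Fin N) (Fin N) ℂ} (hmeas : ∀ ℓ k, EntriesMeasurable (A ℓ k))
    (hindep : iIndep (fun ℓ => famSigma (A ℓ)) μ) (hperm : ∀ ℓ, PermInvariant μ (A ℓ))
    (σ : ι → Equiv.Perm (Fin N)) :
    IdentDistrib (fun ω ℓ k i j => A ℓ k ω (σ ℓ i) (σ ℓ j)) (fun ω ℓ k i j => A ℓ k ω i j) μ μ :=
  IdentDistrib.pi (fun ℓ => (hperm ℓ).identDistrib (hmeas ℓ) (σ ℓ)) (iIndepFun_submatrix hindep σ)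
    (iIndepFun_submatrix hindep 1)

lemma lintegral_ofReal_le_of_sum_identDistrib_le {α G E : Type*} [MeasurableSpace α]
    {ν : Measure α} [IsProbabilityMeasure ν] [Fintype G] [Nonempty G] [MeasurableSpace E]
    {X : α → E} {Y : G → α → E} (hY : ∀ σ, IdentDistrib (Y σ) X ν ν) {g : E → ℝ}
    (hg : Measurable g) (hg0 : ∀ x, 0 ≤ g x) {c : ℝ}
    (hsum : ∀ᵐ ω ∂ν, ∑ σ, g (Y σ ω) ≤ Fintype.card G * c) :
    ∫⁻ ω, ENNReal.ofReal (g (X ω)) ∂ν ≤ ENNReal.ofReal c := by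
  have hgY : ∀ σ, IdentDistrib (fun ω => ENNReal.ofReal (g (Y σ ω)))
      (fun ω => ENNReal.ofReal (g (X ω))) ν ν := fun σ => (hY σ).comp hg.ennreal_ofReal
  refine (ENNReal.mul_le_mul_iff_right (a := Fintype.card G) (by simp) (by simp)).1 ?_
  calc Fintype.card G * ∫⁻ ω, ENNReal.ofReal (g (X ω)) ∂ν
      = ∑ _σ : G, ∫⁻ ω, ENNReal.ofReal (g (X ω)) ∂ν := by
        rw [Finset.sum_const, Finset.card_univ, nsmul_eq_mul]
    _ = ∑ σ, ∫⁻ ω, ENNReal.ofReal (g (Y σ ω)) ∂ν :=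
        Finset.sum_congr rfl fun σ _ => (hgY σ).lintegral_eq.symm
    _ = ∫⁻ ω, ENNReal.ofReal (∑ σ, g (Y σ ω)) ∂ν := by
        rw [← lintegral_finsetSum' _ fun σ _ => (hgY σ).aemeasurable_fst]
        simp only [ENNReal.ofReal_sum_of_nonneg fun _ _ => hg0 _]
    _ ≤ ∫⁻ _, ENNReal.ofReal (Fintype.card G * c) ∂ν :=
        lintegral_mono_ae (hsum.mono fun _ h => ENNReal.ofReal_le_ofReal h)
    _ = Fintype.card G * ENNReal.ofReal c := by
        rw [lintegral_const, measure_univ, mul_one, ENNReal.ofReal_mul (Nat.cast_nonneg _),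
          ENNReal.ofReal_natCast]

lemma tendsto_measure_lt_of_tendsto_lintegral {α β : Type*} [MeasurableSpace α] {ν : Measure α}
    {l : Filter β} {X Y : β → α → ℝ} {c δ : ℝ} (hY : ∀ b, Measurable (Y b))
    (hlim : Tendsto (fun b => ∫⁻ ω, ENNReal.ofReal (Y b ω) ∂ν) l (nhds 0)) (hc : 0 < c)
    (hδ : 0 < δ) (hXY : ∀ b, ∀ᵐ ω ∂ν, X b ω ≤ c * Y b ω) :
    Tendsto (fun b => ν {ω | δ < X b ω}) l (nhds 0) := by
  have hδc : ENNReal.ofReal (δ / c) ≠ 0 := (ENNReal.ofReal_pos.2 (div_pos hδ hc)).ne'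
  have hmarkov : ∀ b, ν {ω | δ < X b ω} ≤
      (∫⁻ ω, ENNReal.ofReal (Y b ω) ∂ν) / ENNReal.ofReal (δ / c) := fun b => by
    refine (measure_mono_ae ?_).trans (meas_ge_le_lintegral_div
      (hY b).ennreal_ofReal.aemeasurable hδc ENNReal.ofReal_ne_top)
    filter_upwards [hXY b] with ω hω (hδω : δ < X b ω)
    exact ENNReal.ofReal_le_ofReal ((div_le_iff₀' hc).2 (hδω.le.trans hω))
  refine tendsto_of_tendsto_of_tendsto_of_le_of_le tendsto_const_nhds ?_ (fun _ => zero_le) hmarkov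
  simpa using ENNReal.Tendsto.div_const hlim (Or.inr hδc)

lemma tendsto_lintegral_sum_norm_sq_diag_centeredMonomialProd [IsProbabilityMeasure μ]
    {ι : Type} [Finite ι] {A : (N : ℕ) → ι → K → Ω → Matrix (Fin N) (Fin N) ℂ} {n m : ℕ}
    {ℓv : Fin n → ι} {d : ℕ → Fin n → ℕ} {k : ℕ → Fin n → ℕ → K}
    {D : (N : ℕ) → Fin n → ℕ → Matrix (Fin N) (Fin N) ℂ} {R : ℝ}
    (hmeas : ∀ N ℓ k, EntriesMeasurable (A N ℓ k))
    (hindep : ∀ N, iIndep (fun ℓ => famSigma (A N ℓ)) μ)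
    (hperm : ∀ N ℓ, PermInvariant μ (A N ℓ)) (hn : n ≠ 0)
    (hℓv : (List.ofFn ℓv).IsChain (· ≠ ·)) (hd : ∀ N i, d N i ≤ m)
    (hdiag : ∀ N i j, (D N i j).IsDiag) (hR : 1 ≤ R) (hD : ∀ N i j, ‖D N i j‖ ≤ R)
    (hA : ∀ N ℓ k, ∀ᵐ ω ∂μ, ‖A N ℓ k ω‖ ≤ R) :
    Tendsto (fun N => ∫⁻ ω, ENNReal.ofReal ((∑ x, ‖centeredMonomialProd (d N) (k N) (D N)
      (fun i k => A N (ℓv i) k ω) x x‖ ^ 2) / N) ∂μ) atTop (nhds 0) := by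
  have := Fintype.ofFinite ι
  refine ENNReal.tendsto_nhds_zero.2 fun s hs => ?_
  obtain ⟨t, ht, hts⟩ := ENNReal.lt_iff_exists_nnreal_btwn.1 hs
  filter_upwards [eventually_sum_norm_sq_diag_centeredMonomialProd_le hn hℓv K m hR
    (ε := t) (by exact_mod_cast ht), eventually_gt_atTop 0] with N hN hN0
  set g : (ι → K → Fin N → Fin N → ℂ) → ℝ := fun a =>
    (∑ x, ‖centeredMonomialProd (d N) (k N) (D N) (fun i k => Matrix.of (a (ℓv i) k)) x x‖ ^ 2) / N
  have hF : EntriesMeasurable fun a : ι → K → Fin N → Fin N → ℂ =>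
      centeredMonomialProd (d N) (k N) (D N) fun i k => Matrix.of (a (ℓv i) k) :=
    .centeredMonomialProd (fun i j x y => by simp only [Matrix.of_apply]; fun_prop) _ _
  have hg : Measurable g :=
    (Finset.measurable_fun_sum _ fun x _ => (hF x x).norm.pow_const 2).div_const _
  have hae : ∀ᵐ ω ∂μ, ∀ i j, ‖A N (ℓv i) (k N i j) ω‖ ≤ R :=
    ae_all_iff.2 fun i => ae_all_iff.2 fun j => hA N _ _
  have hlint : ∫⁻ ω, ENNReal.ofReal (g fun ℓ k i j => A N ℓ k ω i j) ∂μ ≤ ENNReal.ofReal t := by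
    refine lintegral_ofReal_le_of_sum_identDistrib_le
      (identDistrib_perm_of_iIndep (hmeas N) (hindep N) (hperm N)) hg (fun a => by positivity)
      (hae.mono fun ω hω => ?_)
    rw [← Finset.sum_div, div_le_iff₀ (Nat.cast_pos.2 hN0)]
    exact (hN (d N) (k N) (D N) (fun i k => A N (ℓv i) k ω) (hd N) (hdiag N) (hD N) hω).trans_eq
      (by ring)
  exact hlint.trans (by rw [ENNReal.ofReal_coe_nnreal]; exact hts.le)

end RandomPermutations

/-! ### Schatten norms of diagonal projections -/

section SchattenNorms

open scoped Matrix.Norms.L2Operator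

variable {N : ℕ}

lemma re_trace_dproj_mul_conjTranspose_pow (F : Matrix (Fin N) (Fin N) ℂ) (p : ℕ) :
    (Matrix.trace ((dproj F * (dproj F)ᴴ) ^ p)).re = ∑ i, (‖F i i‖ ^ 2) ^ p := by
  rw [dproj_eq_diagonal, Matrix.diagonal_conjTranspose, Matrix.diagonal_mul_diagonal,
    Matrix.diagonal_pow, Matrix.trace_diagonal, Complex.re_sum]
  refine Finset.sum_congr rfl fun i _ => ?_
  simp only [Pi.pow_apply, Pi.star_apply, RCLike.star_def, Complex.mul_conj,
    Complex.normSq_eq_norm_sq, ← Complex.ofReal_pow, Complex.ofReal_re]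

lemma re_trace_dproj_mul_conjTranspose_pow_le {F : Matrix (Fin N) (Fin N) ℂ} {B : ℝ} {p : ℕ}
    (hF : ‖F‖ ≤ B) (hp : p ≠ 0) :
    (Matrix.trace ((dproj F * (dproj F)ᴴ) ^ p)).re ≤ (B ^ 2) ^ (p - 1) * ∑ i, ‖F i i‖ ^ 2 := by
  obtain ⟨q, rfl⟩ := Nat.exists_eq_succ_of_ne_zero hp
  rw [re_trace_dproj_mul_conjTranspose_pow, Finset.mul_sum]
  refine Finset.sum_le_sum fun i _ => ?_
  have hi : ‖F i i‖ ≤ B := (norm_entry_le_l2_opNorm F i i).trans hF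
  rw [pow_succ, Nat.succ_sub_one]
  gcongr

end SchattenNorms

open scoped Matrix.Norms.L2Operator in
theorem asymptotically_free_amalg_diagonal_in_probability_general
    {Ω : Type} [MeasurableSpace Ω] (μ : Measure Ω) [IsProbabilityMeasure μ]
    {K : Type} {L : ℕ} (A : (N : ℕ) → Fin L → K → Ω → Matrix (Fin N) (Fin N) ℂ)
    (hmeas : ∀ N ℓ k, EntriesMeasurable (A N ℓ k))
    (hop : UnifOpNormBound μ A)
    (hindep : IndepFamilies μ A)
    (hperm : ∀ (N : ℕ) (ℓ : Fin L), PermInvariant μ (A N ℓ))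
    (n : ℕ) (hn : n ≠ 0) (ℓv : Fin n → Fin L)
    (hadj : ∀ (i : ℕ) (h1 : i + 1 < n),
      ℓv ⟨i, Nat.lt_of_succ_lt h1⟩ ≠ ℓv ⟨i + 1, h1⟩)
    (dv : ℕ → Fin n → ℕ) (kv : ℕ → Fin n → ℕ → K)
    (D : (N : ℕ) → Fin n → ℕ → Matrix (Fin N) (Fin N) ℂ)
    (hdiag : ∀ N i j, (D N i j).IsDiag)
    (dmax : ℕ) (hdeg : ∀ N i, dv N i ≤ dmax)
    (C' : ℝ) (hDbdd : ∀ N i j, matOpNorm (D N i j) ≤ C')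
    (p : ℕ) (hp : 1 ≤ p) (δ : ℝ) (hδ : 0 < δ) :
    Filter.Tendsto
      (fun N : ℕ => μ {ω : Ω | δ <
        ((fun ε : Matrix (Fin N) (Fin N) ℂ => Matrix.trace ((ε * εᴴ) ^ p))
            (dproj (centeredProd fun i : Fin n =>
              monomialEval (fun k => A N (ℓv i) k ω) (dv N i) (kv N i) (D N i)))).re
          / N})
      atTop (nhds 0) := by
  obtain ⟨C, hC⟩ := hop
  set R := max 1 (max C C')
  have hR : 1 ≤ R := le_max_left _ _
  have hD : ∀ N i j, ‖D N i j‖ ≤ R := fun N i j => LE.le.trans (hDbdd N i j) (by simp [R])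
  have hA : ∀ N ℓ k, ∀ᵐ ω ∂μ, ‖A N ℓ k ω‖ ≤ R := fun N ℓ k =>
    (hC N ℓ k).mono fun ω h => LE.le.trans h (by simp [R])
  have hF : ∀ N, EntriesMeasurable fun ω =>
      centeredMonomialProd (dv N) (kv N) (D N) fun i k => A N (ℓv i) k ω := fun N =>
    .centeredMonomialProd (fun i j => hmeas N _ _) _ _
  set B := (2 * (R ^ 2) ^ (dmax + 1)) ^ n
  refine tendsto_measure_lt_of_tendsto_lintegral
    (fun N => (Finset.measurable_fun_sum _ fun x _ => (hF N x x).norm.pow_const 2).div_const N)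
    (tendsto_lintegral_sum_norm_sq_diag_centeredMonomialProd (k := kv) hmeas hindep hperm hn
      (List.isChain_ofFn.2 hadj) hdeg hdiag hR hD hA)
    (show 0 < (B ^ 2) ^ (p - 1) by positivity) hδ fun N => ?_
  have hAN : ∀ᵐ ω ∂μ, ∀ i j, ‖A N (ℓv i) (kv N i j) ω‖ ≤ R :=
    ae_all_iff.2 fun i => ae_all_iff.2 fun j => hA N _ _
  filter_upwards [hAN] with ω hω
  rw [← mul_div_assoc]
  exact div_le_div_of_nonneg_right (re_trace_dproj_mul_conjTranspose_pow_le
    (norm_centeredMonomialProd_le hR (hdeg N) (hD N) hω) (by omega)) N.cast_nonneg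

/-- Theorem 1.2, convergence in probability.
Under the hypotheses of Statement 0, the normalized Schatten norms of `ε_N`
converge to zero in probability: for every `p ≥ 1` and every `δ > 0`,
`P[(1/N) Tr((ε_N ε_N^*)^p) > δ] → 0` as `N → ∞`. -/
theorem asymptotically_free_amalg_diagonal_in_probability
    {Ω : Type} [MeasurableSpace Ω] (μ : Measure Ω) [IsProbabilityMeasure μ]
    {K : Type} [Nonempty K] [Finite K] {L : ℕ} (hL : 1 ≤ L)
    (A : (N : ℕ) → Fin L → K → Ω → Matrix (Fin N) (Fin N) ℂ)
    (hmeas : ∀ N ℓ k, EntriesMeasurable (A N ℓ k))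
    (hop : UnifOpNormBound μ A)
    (hindep : IndepFamilies μ A)
    (hperm : ∀ (N : ℕ) (ℓ : Fin L), PermInvariant μ (A N ℓ))
    (n : ℕ) (hn : 2 ≤ n) (ℓv : Fin n → Fin L)
    (hadj : ∀ (i : ℕ) (h1 : i + 1 < n),
      ℓv ⟨i, Nat.lt_of_succ_lt h1⟩ ≠ ℓv ⟨i + 1, h1⟩)
    (dv : ℕ → Fin n → ℕ) (kv : ℕ → Fin n → ℕ → K)
    (D : (N : ℕ) → Fin n → ℕ → Matrix (Fin N) (Fin N) ℂ)
    (hdiag : ∀ N i j, (D N i j).IsDiag)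
    (dmax : ℕ) (hdeg : ∀ N i, dv N i ≤ dmax)
    (C' : ℝ) (hDbdd : ∀ N i j, matOpNorm (D N i j) ≤ C')
    (p : ℕ) (hp : 1 ≤ p) (δ : ℝ) (hδ : 0 < δ) :
    Filter.Tendsto
      (fun N : ℕ => μ {ω : Ω | δ <
        ((fun ε : Matrix (Fin N) (Fin N) ℂ => Matrix.trace ((ε * εᴴ) ^ p))
            (dproj (centeredProd fun i : Fin n =>
              monomialEval (fun k => A N (ℓv i) k ω) (dv N i) (kv N i) (D N i)))).re
          / N})
      atTop (nhds 0) :=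
  asymptotically_free_amalg_diagonal_in_probability_general μ A hmeas hop hindep hperm n (by omega)
    ℓv hadj dv kv D hdiag dmax hdeg C' hDbdd p hp δ hδ
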